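/- There exists an absolute constant c ∈ ℕ such that the following holds for all n ≥ 1. Let g ∈ GL_n(ℚ) have entries of height at most h, where h ≥ 2, and suppose g = s·u = u·s where s ∈ GL_n(ℚ̄) is semisimple and u ∈ GL_n(ℚ̄) is unipotent (the multiplicative Jordan–Chevalley decomposition of g). Then the Zariski closure Zcl(⟨s⟩) of the cyclic subgroup generated by s is d-bounded over ℚ for d = n·⌈(c·n⁷·n!·log₂ h)^n⌉. -/

import Mathlib

noncomputable section

open scoped MatrixGroups
open MvPolynomial

/-- The field of algebraic numbers. -/
abbrev Qbar : Type := AlgebraicClosure ℚ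

/-- The zero set `V(I)` of a set `I` of multivariate polynomials over `ℚ̄`. -/
def zeroSet {σ : Type} (I : Set (MvPolynomial σ Qbar)) : Set (σ → Qbar) :=
  {a | ∀ f ∈ I, MvPolynomial.eval a f = 0}

/-- A subset of affine space over `ℚ̄` is an algebraic set if it is a zero set. -/
def IsAlgebraicSet {σ : Type} (X : Set (σ → Qbar)) : Prop :=
  ∃ I : Set (MvPolynomial σ Qbar), X = zeroSet I

/-- The Zariski closure: the smallest algebraic set containing `Y`. -/
def zariskiClosure {σ : Type} (Y : Set (σ → Qbar)) : Set (σ → Qbar) :=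
  zeroSet {f : MvPolynomial σ Qbar | ∀ a ∈ Y, MvPolynomial.eval a f = 0}

/-- `X` is `d`-bounded over `ℚ`: it is the zero set of a set of polynomials of total
degree at most `d` with rational coefficients. -/
def BoundedOverQ {σ : Type} (X : Set (σ → Qbar)) (d : ℕ) : Prop :=
  ∃ I : Set (MvPolynomial σ Qbar), X = zeroSet I ∧
    ∀ f ∈ I, f.totalDegree ≤ d ∧ ∀ m, f.coeff m ∈ Set.range (algebraMap ℚ Qbar)

/-- Coordinates for the affine space `ℚ̄^{n²+1}` in which `GL_n(ℚ̄)` is embedded. -/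
abbrev glIdx (n : ℕ) : Type := (Fin n × Fin n) ⊕ Unit

/-- The point `(M, det(M)⁻¹)` of `ℚ̄^{n²+1}` associated to `g ∈ GL_n(ℚ̄)`. -/
def glPoint {n : ℕ} (g : GL (Fin n) Qbar) : glIdx n → Qbar :=
  Sum.elim (fun p => (g : Matrix (Fin n) (Fin n) Qbar) p.1 p.2)
    (fun _ => ((g : Matrix (Fin n) (Fin n) Qbar).det)⁻¹)

/-- The matrix part of a point of `ℚ̄^{n²+1}`. -/
def pointMatrix {n : ℕ} (a : glIdx n → Qbar) : Matrix (Fin n) (Fin n) Qbar :=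
  Matrix.of fun i j => a (Sum.inl (i, j))

/-- The height of a rational number `a/b` in lowest terms is `max |a| b`. -/
def ratHeight (q : ℚ) : ℕ := max q.num.natAbs q.den

/-- `g` has rational entries, i.e. `g ∈ GL_n(ℚ)`. -/
def HasRatEntries {n : ℕ} (g : GL (Fin n) Qbar) : Prop :=
  ∀ i j, ∃ q : ℚ, (g : Matrix (Fin n) (Fin n) Qbar) i j = algebraMap ℚ Qbar q

/-- `g` has rational entries of height at most `h`. -/
def EntriesHeightLE {n : ℕ} (g : GL (Fin n) Qbar) (h : ℕ) : Prop :=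
  ∀ i j, ∃ q : ℚ, (g : Matrix (Fin n) (Fin n) Qbar) i j = algebraMap ℚ Qbar q ∧ ratHeight q ≤ h

/-- A matrix `g` is unipotent if `(g - 1)^n = 0`. -/
def IsUnipotent {n : ℕ} (g : GL (Fin n) Qbar) : Prop :=
  ((g : Matrix (Fin n) (Fin n) Qbar) - 1) ^ n = 0

/-- A matrix is semisimple if it is diagonalizable over `ℚ̄`. -/
def IsSemisimpleMat {n : ℕ} (M : Matrix (Fin n) (Fin n) Qbar) : Prop :=
  ∃ (P : GL (Fin n) Qbar) (dvec : Fin n → Qbar),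
    M = (P : Matrix (Fin n) (Fin n) Qbar) * Matrix.diagonal dvec *
      ((P⁻¹ : GL (Fin n) Qbar) : Matrix (Fin n) (Fin n) Qbar)

/-- Iterated base-2 exponentiation: `iexp 0 x = x`, `iexp (k+1) x = 2 ^ iexp k x`. -/
def iexp : ℕ → ℕ → ℕ
  | 0, x => x
  | k + 1, x => 2 ^ iexp k x

/-!
Write `s = P · diag(λ) · P⁻¹`, so that the `λ i` are the eigenvalues of `g`. By independence of
characters, a Laurent polynomial vanishing at all powers of `λ` vanishes at every point of the torus
satisfying the multiplicative relations of `λ`. Hence the closure of `⟨s⟩` is cut out by the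
equations saying that `P⁻¹ · X · P` is diagonal and invertible and by the binomials attached to
generators of the lattice of relations, and its degree is governed by the size of these generators.

To bound them, let `l` be a relation with an exponent exceeding `N`, and round the vectors
`(t / N) · l`, `t < N`, to integer vectors. By the pigeonhole principle there are more than `ω`
values of `t` whose rounding errors are so close that the monomials at the rounded vectors differ by
elements of tiny height, i.e. by roots of unity. If the field generated by the eigenvalues has at
most `ω` roots of unity, then two of these monomials agree, and the difference of the two rounded
vectors splits `l` into a sum of two relations with smaller exponents.

That an element `a` of tiny height in the group generated by the `λ i` is a root of unity follows
from Dobrowolski's argument for its norms to the fields `ℚ(λ i)`, whose degree is at most `n`, not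
`n!`: once these norms are torsion, the logarithms of the conjugates of `a` form a vector orthogonal
to those of all the `λ i`, hence to itself.

Finally, `s` has rational entries by uniqueness of the Jordan decomposition, and for a set of
rational points equations over `ℚ̄` can be traded for rational ones of the same degree by applying
linear forms `ℚ̄ → ℚ` to the coefficients.
-/

lemma trace_pow_prime_modEq {S : Type*} [CommRing S] [Module.Free ℤ S] [Module.Finite ℤ S]
    {p : ℕ} (hp : p.Prime) (x : S) :
    Algebra.trace ℤ S (x ^ p) ≡ Algebra.trace ℤ S x [ZMOD p] := by
  have : Fact p.Prime := ⟨hp⟩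
  let b := Module.Free.chooseBasis ℤ S
  have key (M : Matrix (Module.Free.ChooseBasisIndex ℤ S) (Module.Free.ChooseBasisIndex ℤ S) ℤ) :
      ((M ^ p).trace : ZMod p) = M.trace := by
    have h := ZMod.trace_pow_card (M.map (Int.castRingHom (ZMod p)))
    rwa [ZMod.pow_card, ← RingHom.mapMatrix_apply, ← map_pow, RingHom.mapMatrix_apply,
      RingHom.mapMatrix_apply, ← AddMonoidHom.map_trace, ← AddMonoidHom.map_trace] at h
  rw [← ZMod.intCast_eq_intCast_iff, Algebra.trace_eq_matrix_trace b,
    Algebra.trace_eq_matrix_trace b, map_pow, key]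

lemma range_subset_range_of_sum_pow_eq {ι K : Type*} [Fintype ι] [Field K] [CharZero K]
    {x y : ι → K} (h : ∀ j < 2 * Fintype.card ι, ∑ i, x i ^ j = ∑ i, y i ^ j) :
    Set.range x ⊆ Set.range y := by
  classical
  rintro _ ⟨i₀, rfl⟩
  by_contra hy
  let s : Finset K := Finset.univ.image x ∪ Finset.univ.image y
  let L : Polynomial K := Lagrange.basis s id (x i₀)
  have hs : s.card ≤ 2 * Fintype.card ι := by
    rw [two_mul]
    exact (Finset.card_union_le _ _).trans (add_le_add Finset.card_image_le Finset.card_image_le)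
  have hxs (i : ι) : x i ∈ s := by simp [s]
  have hys (i : ι) : y i ∈ s := by simp [s]
  have hL {z : K} (hz : z ∈ s) : L.eval z = if z = x i₀ then 1 else 0 := by
    split_ifs with hzx
    · rw [hzx]
      exact Lagrange.eval_basis_self Function.injective_id.injOn (hxs i₀)
    · exact Lagrange.eval_basis_of_ne (v := id) (Ne.symm hzx) hz
  have hdeg : L.natDegree < 2 * Fintype.card ι := by
    have h₁ : L.natDegree = s.card - 1 :=
      Lagrange.natDegree_basis Function.injective_id.injOn (hxs i₀)
    have h₂ : 0 < s.card := Finset.card_pos.2 ⟨_, hxs i₀⟩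
    omega
  have hsum : ∑ i, L.eval (x i) = ∑ i, L.eval (y i) := by
    simp only [Polynomial.eval_eq_sum_range' hdeg]
    rw [Finset.sum_comm, Finset.sum_comm (s := Finset.univ)]
    refine Finset.sum_congr rfl fun j hj => ?_
    rw [← Finset.mul_sum, ← Finset.mul_sum, h j (Finset.mem_range.1 hj)]
  have hy₀ : ∑ i, L.eval (y i) = 0 :=
    Finset.sum_eq_zero fun i _ => by rw [hL (hys i), if_neg fun hi => hy ⟨i, hi⟩]
  rw [hy₀, Finset.sum_congr rfl fun i _ => hL (hxs i), Finset.sum_boole, Nat.cast_eq_zero,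
    Finset.card_eq_zero, Finset.filter_eq_empty_iff] at hsum
  exact hsum (Finset.mem_univ i₀) rfl

lemma isOfFinOrder_of_subset_image_pow {M : Type*} [MonoidWithZero M] [IsLeftCancelMulZero M]
    {S : Set M} (hS : S.Finite) {p : ℕ} (hp : 1 < p) (h : S ⊆ (· ^ p) '' S) {x : M} (hx : x ∈ S)
    (hx₀ : x ≠ 0) : IsOfFinOrder x := by
  have : Finite S := hS
  have himage : (· ^ p) '' S = S :=
    (Set.eq_of_subset_of_ncard_le h (Set.ncard_image_le hS) (hS.image _)).symm
  have hmaps : Set.MapsTo (· ^ p) S S := Set.mapsTo_iff_image_subset.2 himage.le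
  have hinj : Function.Injective (hmaps.restrict (· ^ p) S S) :=
    Finite.injective_iff_surjective.2 (hmaps.restrict_surjective_iff.2 h)
  obtain ⟨k, hk, hkx⟩ := hinj.mem_periodicPts ⟨x, hx⟩
  have hpow : x ^ p ^ k = x := by
    have := congrArg Subtype.val hkx
    rwa [hmaps.iterate_restrict, Set.MapsTo.val_restrict_apply, pow_iterate] at this
  have hpk : 1 < p ^ k := Nat.one_lt_pow hk.ne' hp
  refine isOfFinOrder_iff_pow_eq_one.2 ⟨p ^ k - 1, Nat.sub_pos_of_lt hpk, mul_left_cancel₀ hx₀ ?_⟩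
  rw [mul_one, mul_pow_sub_one (by omega), hpow]

section Embeddings

open NumberField

variable {F : Type*} [Field F] [NumberField F]

lemma trace_pow_eq_sum_embeddings (x : 𝓞 F) (j : ℕ) :
    ((Algebra.trace ℤ (𝓞 F) (x ^ j) : ℤ) : ℂ) = ∑ φ : F →ₐ[ℚ] ℂ, φ x ^ j := by
  have h := trace_eq_sum_embeddings (K := ℚ) ℂ (x := ((x ^ j : 𝓞 F) : F))
  rw [← Algebra.coe_trace_int] at h
  simpa using h

lemma abs_trace_pow_le {x : 𝓞 F} {B : ℝ} {m j : ℕ} (hB : 1 ≤ B)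
    (hx : ∀ φ : F →ₐ[ℚ] ℂ, ‖φ x‖ ^ m ≤ B) (hj : j ≤ m) :
    |(Algebra.trace ℤ (𝓞 F) (x ^ j) : ℝ)| ≤ Module.finrank ℚ F * B := by
  rw [← Complex.norm_intCast, trace_pow_eq_sum_embeddings]
  calc ‖∑ φ : F →ₐ[ℚ] ℂ, φ x ^ j‖ ≤ ∑ _φ : F →ₐ[ℚ] ℂ, B := by
        refine norm_sum_le_of_le _ fun φ _ => ?_
        rw [norm_pow]
        rcases le_total ‖φ x‖ 1 with h | h
        · exact (pow_le_one₀ (norm_nonneg _) h).trans hB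
        · exact (pow_le_pow_right₀ h hj).trans (hx φ)
    _ = Module.finrank ℚ F * B := by
        rw [Finset.sum_const, Finset.card_univ, AlgHom.card, nsmul_eq_mul]

-- A weak form of Dobrowolski's theorem: for a prime `p` between `4d` and `8d` the power sums of the
-- conjugates of `x` and of `x ^ p` are congruent mod `p` and too small to differ.
lemma isOfFinOrder_of_norm_pow_le_two {x : 𝓞 F} (hx₀ : x ≠ 0)
    (hx : ∀ φ : F →ₐ[ℚ] ℂ, ‖φ x‖ ^ (16 * Module.finrank ℚ F ^ 2) ≤ 2) : IsOfFinOrder x := by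
  set d := Module.finrank ℚ F
  have hd₀ : 0 < d := Module.finrank_pos
  obtain ⟨p, hp, hdp, hpd⟩ := Nat.exists_prime_lt_and_le_two_mul (4 * d) (by omega)
  have htrace (j : ℕ) (hj : j < 2 * d) :
      Algebra.trace ℤ (𝓞 F) (x ^ j) = Algebra.trace ℤ (𝓞 F) ((x ^ p) ^ j) := by
    refine sub_eq_zero.1 (Int.eq_zero_of_abs_lt_dvd (m := p) ?_ ?_)
    · rw [← pow_mul, mul_comm p, pow_mul]
      exact (trace_pow_prime_modEq hp _).dvd
    · have hjp : p * j ≤ 16 * d ^ 2 := by nlinarith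
      have h₁ := abs_trace_pow_le one_le_two hx (hj.le.trans (by nlinarith : 2 * d ≤ 16 * d ^ 2))
      have h₂ := abs_trace_pow_le one_le_two hx hjp
      rw [pow_mul] at h₂
      have hdp' : (4 * d : ℝ) < p := mod_cast hdp
      have h := abs_sub (Algebra.trace ℤ (𝓞 F) (x ^ j) : ℝ) (Algebra.trace ℤ (𝓞 F) ((x ^ p) ^ j))
      exact_mod_cast (by linarith :
        |(Algebra.trace ℤ (𝓞 F) (x ^ j) : ℝ) - Algebra.trace ℤ (𝓞 F) ((x ^ p) ^ j)| < p)
  have hrange : Set.range (fun φ : F →ₐ[ℚ] ℂ => φ x) ⊆ Set.range fun φ : F →ₐ[ℚ] ℂ => φ x ^ p := by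
    refine range_subset_range_of_sum_pow_eq fun j hj => ?_
    rw [AlgHom.card] at hj
    have h := congrArg (Int.cast : ℤ → ℂ) (htrace j hj)
    rw [trace_pow_eq_sum_embeddings, trace_pow_eq_sum_embeddings] at h
    simpa using h
  let φ : F →ₐ[ℚ] ℂ := IsAlgClosed.lift
  have hinj : Function.Injective (φ.toRingHom.comp (algebraMap (𝓞 F) F)) :=
    φ.toRingHom.injective.comp RingOfIntegers.coe_injective
  obtain ⟨k, hk, hxk⟩ := (isOfFinOrder_of_subset_image_pow (x := φ x) (Set.finite_range _)
    hp.one_lt (hrange.trans (Set.range_comp (· ^ p) (fun φ : F →ₐ[ℚ] ℂ => φ x)).le) ⟨φ, rfl⟩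
    ((map_ne_zero_iff _ hinj).2 hx₀)).exists_pow_eq_one
  exact isOfFinOrder_iff_pow_eq_one.2 ⟨k, hk, hinj (by simpa using hxk)⟩

end Embeddings

section Heights

open Height NumberField

variable {K : Type*} [Field K] [NumberField K]

lemma lt_two_of_pow_le_two {x : ℝ} {k : ℕ} (hk : 1 < k) (hx : x ^ k ≤ 2) : x < 2 :=
  lt_of_pow_lt_pow_left₀ k zero_le_two (hx.trans_lt (lt_self_pow₀ one_lt_two hk))

lemma isIntegral_of_mulHeight₁_lt_two {x : K} (hx : mulHeight₁ x < 2) : IsIntegral ℤ x := by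
  obtain ⟨m, hm, hmx, hint⟩ := exists_nat_le_mulHeight₁ x
  have hm₁ : m = 1 := by
    have : m < 2 := by exact_mod_cast hmx.trans_lt hx
    omega
  simpa [hm₁] using hint

lemma prod_infinitePlace_pow_mult {M : Type*} [CommMonoid M] (f : InfinitePlace K → M) :
    ∏ v : InfinitePlace K, f v ^ v.mult = ∏ φ : K →+* ℂ, f (.mk φ) := by
  classical
  rw [← Finset.prod_fiberwise (g := InfinitePlace.mk)]
  refine Finset.prod_congr rfl fun v _ => ?_
  rw [Finset.prod_congr rfl fun φ hφ => by rw [(Finset.mem_filter.1 hφ).2], Finset.prod_const,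
    InfinitePlace.card_filter_mk_eq]

lemma prod_norm_embeddings_le_mulHeight₁ (S : Finset (K →+* ℂ)) (x : K) :
    ∏ φ ∈ S, ‖φ x‖ ≤ mulHeight₁ x :=
  calc ∏ φ ∈ S, ‖φ x‖ ≤ ∏ φ ∈ S, max ‖φ x‖ 1 :=
        Finset.prod_le_prod (fun _ _ => norm_nonneg _) fun _ _ => le_max_left _ _
    _ ≤ ∏ φ : K →+* ℂ, max ‖φ x‖ 1 :=
        Finset.prod_le_prod_of_subset_of_one_le (Finset.subset_univ S)
          (fun _ _ => by positivity) fun _ _ _ => le_max_right _ _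
    _ = ∏ v : InfinitePlace K, max (v x) 1 ^ v.mult :=
        (prod_infinitePlace_pow_mult fun v => max (v x) 1).symm
    _ ≤ mulHeight₁ x := by
        rw [NumberField.mulHeight₁_eq]
        refine le_mul_of_one_le_right (by positivity) ?_
        exact one_le_finprod fun v => le_max_right _ _

lemma mulHeight₁_le_of_isIntegral {x : K} (hx : IsIntegral ℤ x) {B : ℝ} (hB : 1 ≤ B)
    (hxB : ∀ φ : K →+* ℂ, ‖φ x‖ ≤ B) : mulHeight₁ x ≤ B ^ Module.finrank ℚ K := by
  have hfin : ∏ᶠ v : FinitePlace K, max (v x) 1 = 1 := by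
    refine finprod_eq_one_of_forall_eq_one fun v => max_eq_right ?_
    rw [← FinitePlace.norm_embedding_eq]
    exact FinitePlace.norm_le_one K v.maximalIdeal (⟨x, hx⟩ : 𝓞 K)
  rw [NumberField.mulHeight₁_eq, hfin, mul_one, prod_infinitePlace_pow_mult fun v => max (v x) 1]
  calc ∏ φ : K →+* ℂ, max ‖φ x‖ 1 ≤ ∏ _φ : K →+* ℂ, B :=
        Finset.prod_le_prod (fun _ _ => by positivity) fun φ _ => max_le (hxB φ) hB
    _ = B ^ Module.finrank ℚ K := by
        rw [Finset.prod_const, Finset.card_univ, Embeddings.card]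

lemma mulHeight₁_le_of_isIntegral_mul {x : K} {b : ℕ} (hb : b ≠ 0) (hx : IsIntegral ℤ (b * x))
    {B : ℝ} (hB : 1 ≤ B) (hxB : ∀ φ : K →+* ℂ, ‖φ x‖ ≤ B) :
    mulHeight₁ x ≤ (b ^ 2 * B) ^ Module.finrank ℚ K := by
  have hb₁ : (1 : ℝ) ≤ b := mod_cast Nat.one_le_iff_ne_zero.2 hb
  have hden : mulHeight₁ (b : K) ≤ (b : ℝ) ^ Module.finrank ℚ K :=
    mulHeight₁_le_of_isIntegral (isIntegral_natCast b) hb₁ fun φ => by simp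
  have hnum : mulHeight₁ (b * x) ≤ (b * B) ^ Module.finrank ℚ K :=
    mulHeight₁_le_of_isIntegral hx (one_le_mul_of_one_le_of_one_le hb₁ hB) fun φ => by
      rw [map_mul, map_natCast, norm_mul, Complex.norm_natCast]
      gcongr
      exact hxB φ
  calc mulHeight₁ x = mulHeight₁ (b * x * (b : K)⁻¹) := by
        rw [mul_comm (b : K), mul_inv_cancel_right₀ (Nat.cast_ne_zero.2 hb)]
    _ ≤ mulHeight₁ (b * x) * mulHeight₁ (b : K) := by
        simpa only [mulHeight₁_inv] using mulHeight₁_mul_le (b * x) (b : K)⁻¹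
    _ ≤ (b * B) ^ Module.finrank ℚ K * (b : ℝ) ^ Module.finrank ℚ K := by
        gcongr
    _ = (b ^ 2 * B) ^ Module.finrank ℚ K := by rw [← mul_pow]; ring

lemma mulHeight₁_pow_le_prod_of_pow_eq {ι : Type*} [Fintype ι] {x : K} {lam : ι → K} {e : ι → ℤ}
    {N k : ℕ} (hN : N ≠ 0) (hx : x ^ N = ∏ i, lam i ^ e i) (he : ∀ i, (e i).natAbs * k ≤ N) :
    mulHeight₁ x ^ k ≤ ∏ i, mulHeight₁ (lam i) := by
  have hprod : 0 ≤ ∏ i, mulHeight₁ (lam i) := Finset.prod_nonneg fun i _ => mulHeight₁_nonneg _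
  refine le_of_pow_le_pow_left₀ hN hprod ?_
  calc (mulHeight₁ x ^ k) ^ N = mulHeight₁ (∏ i, lam i ^ e i) ^ k := by
        rw [← hx, mulHeight₁_pow, pow_right_comm]
    _ ≤ (∏ i, mulHeight₁ (lam i) ^ (e i).natAbs) ^ k := by
        simp only [← mulHeight₁_zpow]
        gcongr
        exact mulHeight₁_prod_le Finset.univ fun i => lam i ^ e i
    _ = ∏ i, mulHeight₁ (lam i) ^ ((e i).natAbs * k) := by
        simp only [← Finset.prod_pow, pow_mul]
    _ ≤ ∏ i, mulHeight₁ (lam i) ^ N :=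
        Finset.prod_le_prod (fun i _ => pow_nonneg (mulHeight₁_nonneg _) _) fun i _ =>
          pow_le_pow_right₀ (one_le_mulHeight₁ _) (he i)
    _ = (∏ i, mulHeight₁ (lam i)) ^ N := Finset.prod_pow _ _ _

lemma norm_apply_norm_le_mulHeight₁ {F : Type*} [Field F] [Algebra F K] [FiniteDimensional F K]
    [Algebra.IsSeparable F K] (φ : F →+* ℂ) (x : K) :
    ‖φ (Algebra.norm F x)‖ ≤ mulHeight₁ x := by
  classical
  let _ := φ.toAlgebra
  have hinj : Function.Injective fun ψ : K →ₐ[F] ℂ => (ψ : K →+* ℂ) :=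
    AlgHom.coe_ringHom_injective
  have h := prod_norm_embeddings_le_mulHeight₁
    (Finset.univ.image fun ψ : K →ₐ[F] ℂ => (ψ : K →+* ℂ)) x
  rw [Finset.prod_image hinj.injOn] at h
  have hnorm := Algebra.norm_eq_prod_embeddings F ℂ x
  rw [RingHom.algebraMap_toAlgebra] at hnorm
  rw [hnorm, norm_prod]
  exact h

lemma isOfFinOrder_norm_of_mulHeight₁_pow_le_two (F : IntermediateField ℚ K) {n : ℕ}
    (hF : Module.finrank ℚ F ≤ n) {x : K} (hx₀ : x ≠ 0) (hx : mulHeight₁ x ^ (16 * n ^ 2) ≤ 2) :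
    IsOfFinOrder (Algebra.norm F x) := by
  have hn : 0 < n := Module.finrank_pos.trans_le hF
  have hlt : mulHeight₁ x < 2 := lt_two_of_pow_le_two (by nlinarith) hx
  have hint : IsIntegral ℤ (Algebra.norm F x) :=
    Algebra.isIntegral_norm F (isIntegral_of_mulHeight₁_lt_two hlt)
  let y : 𝓞 F := ⟨Algebra.norm F x, hint⟩
  have hy₀ : y ≠ 0 := fun h =>
    hx₀ (Algebra.norm_eq_zero_iff.1 (congrArg (algebraMap (𝓞 F) F) h))
  have hy : IsOfFinOrder y := isOfFinOrder_of_norm_pow_le_two hy₀ fun φ =>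
    calc ‖φ y‖ ^ (16 * Module.finrank ℚ F ^ 2)
        ≤ mulHeight₁ x ^ (16 * Module.finrank ℚ F ^ 2) := by
          gcongr
          exact norm_apply_norm_le_mulHeight₁ φ.toRingHom x
      _ ≤ mulHeight₁ x ^ (16 * n ^ 2) := by
          gcongr
          exact one_le_mulHeight₁ x
      _ ≤ 2 := hx
  exact (algebraMap (𝓞 F) F).toMonoidHom.isOfFinOrder hy

end Heights

section Orthogonality

variable {G A : Type*} [Group G] [CommGroup A] [MulDistribMulAction G A]

lemma sum_smul_mul_smul_eq_zero [Fintype G] (w : Additive A →+ ℝ) {H : Subgroup G} [Fintype H]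
    {a b : A} (hb : ∀ σ ∈ H, σ • b = b) (ha : IsOfFinOrder (∏ σ : H, σ • a)) :
    ∑ τ : G, w (.ofMul (τ • a)) * w (.ofMul (τ • b)) = 0 := by
  have hzero (τ : G) : ∑ σ : H, w (.ofMul (τ • σ • a)) = 0 := by
    obtain ⟨k, hk, hak⟩ := ha.exists_pow_eq_one
    have h : k • w (.ofMul (τ • ∏ σ : H, σ • a)) = 0 := by
      rw [← map_nsmul, ← ofMul_pow, ← smul_pow', hak, smul_one, ofMul_one, map_zero]
    rw [Finset.smul_prod', ofMul_prod, map_sum] at h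
    exact (smul_eq_zero.1 h).resolve_left hk.ne'
  have htranslate (σ : H) : ∑ τ : G, w (.ofMul (τ • a)) * w (.ofMul (τ • b)) =
      ∑ τ : G, w (.ofMul (τ • σ • a)) * w (.ofMul (τ • b)) := by
    rw [← Equiv.sum_comp (Equiv.mulRight (σ : G))]
    refine Finset.sum_congr rfl fun τ _ => ?_
    rw [Equiv.coe_mulRight, mul_smul, mul_smul, hb σ σ.2, Subgroup.smul_def]
  have hcard : Fintype.card H • ∑ τ : G, w (.ofMul (τ • a)) * w (.ofMul (τ • b)) = 0 := by
    rw [← Finset.card_univ, ← Finset.sum_const, Finset.sum_congr rfl fun σ _ => htranslate σ,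
      Finset.sum_comm]
    refine Finset.sum_eq_zero fun τ _ => ?_
    rw [← Finset.sum_mul, hzero, zero_mul]
  exact (smul_eq_zero.1 hcard).resolve_left Fintype.card_ne_zero

lemma map_eq_zero_of_mem_closure [Finite G] (w : Additive A →+ ℝ) {S : Set A} {a : A}
    (ha : a ∈ Subgroup.closure S)
    (hS : ∀ b ∈ S, ∃ H : Subgroup G, (∀ σ ∈ H, σ • b = b) ∧
      ∀ [Fintype H], IsOfFinOrder (∏ σ : H, σ • a)) : w (.ofMul a) = 0 := by
  have := Fintype.ofFinite G
  have horth {b : A} (hb : b ∈ Subgroup.closure S) :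
      ∑ τ : G, w (.ofMul (τ • a)) * w (.ofMul (τ • b)) = 0 := by
    induction hb using Subgroup.closure_induction with
    | mem b hb =>
      classical
      obtain ⟨H, hHb, hHa⟩ := hS b hb
      exact sum_smul_mul_smul_eq_zero w hHb hHa
    | one => simp
    | mul b c _ _ hb hc => simp only [smul_mul', ofMul_mul, map_add, mul_add,
        Finset.sum_add_distrib, hb, hc, add_zero]
    | inv b _ hb => simp only [smul_inv', ofMul_inv, map_neg, mul_neg, Finset.sum_neg_distrib, hb,
        neg_zero]
  have h := (Finset.sum_eq_zero_iff_of_nonneg fun τ _ => mul_self_nonneg _).1 (horth ha) 1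
    (Finset.mem_univ 1)
  simpa using h

end Orthogonality

section TorsionCriterion

open Height IntermediateField

variable {K : Type*} [Field K] [NumberField K] [IsGalois ℚ K]

lemma isOfFinOrder_prod_fixingSubgroup_smul {F : IntermediateField ℚ K} {a : Kˣ}
    [Fintype F.fixingSubgroup] (ha : IsOfFinOrder (Algebra.norm F (a : K))) :
    IsOfFinOrder (∏ σ : F.fixingSubgroup, σ • a) := by
  have hprod : ((∏ σ : F.fixingSubgroup, σ • a : Kˣ) : K) =
      algebraMap F K (Algebra.norm F (a : K)) := by
    rw [Algebra.norm_eq_prod_automorphisms, Units.coe_prod]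
    exact Fintype.prod_equiv (fixingSubgroupEquiv F).toEquiv _ _ fun σ => rfl
  rw [← Units.isOfFinOrder_val, hprod]
  exact (algebraMap F K).toMonoidHom.isOfFinOrder ha

lemma norm_eq_one_of_isOfFinOrder_norm {S : Set Kˣ} {a : Kˣ} (ha : a ∈ Subgroup.closure S)
    (hS : ∀ b ∈ S, IsOfFinOrder (Algebra.norm ℚ⟮(b : K)⟯ (a : K))) (φ : K →+* ℂ) :
    ‖φ a‖ = 1 := by
  let w : Additive Kˣ →+ ℝ :=
    { toFun := fun x => Real.log ‖φ (x.toMul : Kˣ)‖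
      map_zero' := by simp
      map_add' := fun x y => by simp [Real.log_mul] }
  refine Real.eq_one_of_pos_of_log_eq_zero (by simp) ?_
  refine map_eq_zero_of_mem_closure (G := K ≃ₐ[ℚ] K) w ha fun b hb =>
    ⟨ℚ⟮(b : K)⟯.fixingSubgroup, fun σ hσ => ?_, isOfFinOrder_prod_fixingSubgroup_smul (hS b hb)⟩
  exact Units.ext ((mem_fixingSubgroup_iff _ σ).1 hσ b (mem_adjoin_simple_self ℚ (b : K)))

lemma isOfFinOrder_of_mulHeight₁_pow_le_two {S : Set Kˣ} {a : Kˣ} (ha : a ∈ Subgroup.closure S)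
    {n : ℕ} (hn : 0 < n) (hS : ∀ b ∈ S, Module.finrank ℚ ℚ⟮(b : K)⟯ ≤ n)
    (hheight : mulHeight₁ (a : K) ^ (16 * n ^ 2) ≤ 2) : IsOfFinOrder a := by
  have hnorm (b : Kˣ) (hb : b ∈ S) : IsOfFinOrder (Algebra.norm ℚ⟮(b : K)⟯ (a : K)) :=
    isOfFinOrder_norm_of_mulHeight₁_pow_le_two _ (hS b hb) a.ne_zero hheight
  have hint : IsIntegral ℤ (a : K) :=
    isIntegral_of_mulHeight₁_lt_two (lt_two_of_pow_le_two (by nlinarith) hheight)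
  obtain ⟨k, hk, hak⟩ := NumberField.Embeddings.pow_eq_one_of_norm_eq_one K ℂ hint
    (norm_eq_one_of_isOfFinOrder_norm ha hnorm)
  exact Units.isOfFinOrder_val.1 (isOfFinOrder_iff_pow_eq_one.2 ⟨k, hk, hak⟩)

lemma isOfFinOrder_of_pow_eq_prod_zpow {ι : Type*} [Fintype ι] {lam : ι → Kˣ} {n : ℕ} (hn : 0 < n)
    (hdeg : ∀ i, Module.finrank ℚ ℚ⟮(lam i : K)⟯ ≤ n) {N k : ℕ} (hN : N ≠ 0) (hk : k ≠ 0)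
    (hheight : (∏ i, mulHeight₁ (lam i : K)) ^ (16 * n ^ 2) ≤ 2 ^ k) {m e : ι → ℤ}
    (hpow : (∏ i, lam i ^ m i) ^ N = ∏ i, lam i ^ e i) (he : ∀ i, (e i).natAbs * k ≤ N) :
    IsOfFinOrder (∏ i, lam i ^ m i) := by
  refine isOfFinOrder_of_mulHeight₁_pow_le_two (S := Set.range lam) ?_ hn ?_ ?_
  · exact Subgroup.prod_mem _ fun i _ =>
      Subgroup.zpow_mem _ (Subgroup.subset_closure (Set.mem_range_self i)) _
  · rintro _ ⟨i, rfl⟩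
    exact hdeg i
  · have hpow' : ((∏ i, lam i ^ m i : Kˣ) : K) ^ N = ∏ i, (lam i : K) ^ e i := by
      rw [← Units.val_pow_eq_pow_val, hpow]
      simp
    have h := mulHeight₁_pow_le_prod_of_pow_eq hN hpow' he
    refine le_of_pow_le_pow_left₀ hk zero_le_two ?_
    rw [pow_right_comm]
    exact (pow_le_pow_left₀ (pow_nonneg (mulHeight₁_nonneg _) _) h _).trans hheight

end TorsionCriterion

section TorsionCount

lemma le_totient_sq_of_odd {w : ℕ} (hw : Odd w) : w ≤ w.totient ^ 2 := by
  induction w using Nat.recOnPosPrimePosCoprime with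
  | zero => exact Nat.zero_le _
  | one => simp
  | prime_pow p k hp hk =>
    have hp₂ : p ≠ 2 := by
      rintro rfl
      exact absurd ((Nat.odd_pow_iff hk.ne').1 hw) (by decide)
    obtain ⟨q, rfl⟩ : ∃ q, p = q + 3 := ⟨p - 3, by have := hp.two_le; omega⟩
    obtain ⟨j, rfl⟩ := Nat.exists_eq_add_one_of_ne_zero hk.ne'
    rw [Nat.totient_prime_pow_succ hp, show q + 3 - 1 = q + 2 by omega, pow_succ, mul_pow]
    exact Nat.mul_le_mul (Nat.le_self_pow two_ne_zero _) (by nlinarith)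
  | coprime a b _ _ hab iha ihb =>
    rw [Nat.odd_mul] at hw
    rw [Nat.totient_mul hab, mul_pow]
    exact Nat.mul_le_mul (iha hw.1) (ihb hw.2)

lemma le_two_mul_totient_sq (w : ℕ) : w ≤ 2 * w.totient ^ 2 := by
  rcases eq_or_ne w 0 with rfl | hw
  · exact Nat.zero_le _
  obtain ⟨k, m, hm, rfl⟩ := Nat.exists_eq_two_pow_mul_odd hw
  have hm' := le_totient_sq_of_odd hm
  rcases k with - | j
  · rw [pow_zero, one_mul]
    omega
  · rw [Nat.totient_mul (Nat.Coprime.pow_left _ (Nat.coprime_two_left.2 hm)),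
      Nat.totient_prime_pow_succ Nat.prime_two]
    calc 2 ^ (j + 1) * m = 2 * (2 ^ j * m) := by ring
      _ ≤ 2 * ((2 ^ j) ^ 2 * m.totient ^ 2) :=
          Nat.mul_le_mul_left 2 (Nat.mul_le_mul (Nat.le_self_pow two_ne_zero _) hm')
      _ = 2 * (2 ^ j * (2 - 1) * m.totient) ^ 2 := by ring

variable {K : Type*} [Field K] [NumberField K]

lemma totient_le_finrank {ζ : K} {w : ℕ} [NeZero w] (hζ : IsPrimitiveRoot ζ w) :
    w.totient ≤ Module.finrank ℚ K := by
  have hint : IsIntegral ℤ ζ := hζ.isIntegral (NeZero.pos w)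
  refine hζ.totient_le_degree_minpoly.trans ?_
  rw [← (minpoly.monic hint).natDegree_map (algebraMap ℤ ℚ),
    ← minpoly.isIntegrallyClosed_eq_field_fractions' ℚ hint]
  exact minpoly.natDegree_le ζ

lemma card_le_of_forall_isOfFinOrder {S : Finset Kˣ} (hS : ∀ x ∈ S, IsOfFinOrder x) :
    S.card ≤ 2 * Module.finrank ℚ K ^ 2 := by
  classical
  let k := ∏ x ∈ S, orderOf x
  have : NeZero k := ⟨Finset.prod_ne_zero_iff.2 fun x hx => (hS x hx).orderOf_pos.ne'⟩
  have hSk : (S : Set Kˣ) ⊆ rootsOfUnity k K := fun x hx => by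
    rw [SetLike.mem_coe, mem_rootsOfUnity, ← orderOf_dvd_iff_pow_eq_one]
    exact Finset.dvd_prod_of_mem _ hx
  obtain ⟨ζ, hζ⟩ := IsCyclic.exists_ofOrder_eq_natCard (α := rootsOfUnity k K)
  set w := Nat.card (rootsOfUnity k K)
  have : NeZero w := ⟨Nat.card_pos.ne'⟩
  have hprim : IsPrimitiveRoot (ζ : Kˣ) w := by
    rwa [← IsPrimitiveRoot.iff_orderOf, ← IsPrimitiveRoot.coe_submonoidClass_iff] at hζ
  calc S.card ≤ w := by
        rw [← Set.ncard_coe_finset]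
        exact Set.ncard_le_ncard hSk (inferInstanceAs (Finite (rootsOfUnity k K)))
    _ ≤ 2 * w.totient ^ 2 := le_two_mul_totient_sq w
    _ ≤ 2 * Module.finrank ℚ K ^ 2 := by
        gcongr
        exact totient_le_finrank (IsPrimitiveRoot.coe_units_iff.2 hprim)

end TorsionCount

section Lattice

lemma abs_sub_lt_of_ediv_eq {a b N : ℤ} (hN : 0 < N) (h : a / N = b / N) : |a - b| < N := by
  have ha := Int.mul_ediv_add_emod a N
  have hb := Int.mul_ediv_add_emod b N
  rw [h] at ha
  rw [abs_lt]
  constructor <;>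
    linarith [Int.emod_nonneg a hN.ne', Int.emod_nonneg b hN.ne', Int.emod_lt_of_pos a hN,
      Int.emod_lt_of_pos b hN]

lemma abs_lt_of_mul_eq {N T d l x e : ℤ} (hNT : N < T) (hl : |l| ≤ T) (hd₀ : 0 ≤ d) (hdN : d < N)
    (he : |e| < N) (h : N * x = d * l + e) : |x| < T := by
  have hN : 0 < N := hd₀.trans_lt hdN
  have hx : N * |x| ≤ d * |l| + |e| := by
    calc N * |x| = |d * l + e| := by rw [← h, abs_mul, abs_of_pos hN]
      _ ≤ |d * l| + |e| := abs_add_le _ _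
      _ = d * |l| + |e| := by rw [abs_mul, abs_of_nonneg hd₀]
  have hdl : d * |l| ≤ (N - 1) * T := mul_le_mul (by omega) hl (abs_nonneg _) (by omega)
  exact lt_of_mul_lt_mul_left (by linarith : N * |x| < N * T) hN.le

lemma abs_ediv_sub_ediv_lt {N T l s t : ℤ} (hNT : N < T) (hl : |l| ≤ T) (hs : 0 ≤ s) (hst : s < t)
    (htN : t < N) : |t * l / N - s * l / N| < T ∧ |l - (t * l / N - s * l / N)| < T := by
  have hN : 0 < N := by omega
  have htl := Int.mul_ediv_add_emod (t * l) N
  have hsl := Int.mul_ediv_add_emod (s * l) N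
  have hrem : |t * l % N - s * l % N| < N := abs_sub_lt_of_ediv_eq hN <| by
    rw [Int.ediv_eq_zero_of_lt (Int.emod_nonneg _ hN.ne') (Int.emod_lt_of_pos _ hN),
      Int.ediv_eq_zero_of_lt (Int.emod_nonneg _ hN.ne') (Int.emod_lt_of_pos _ hN)]
  constructor
  · exact abs_lt_of_mul_eq hNT hl (d := t - s) (e := s * l % N - t * l % N) (by omega) (by omega)
      (by rwa [abs_sub_comm]) (by linarith)
  · exact abs_lt_of_mul_eq hNT hl (d := N - (t - s)) (e := t * l % N - s * l % N) (by omega)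
      (by omega) hrem (by linarith)

variable {ι : Type*} [Fintype ι]

lemma exists_finset_emod_close (l : ι → ℤ) {N k ω : ℕ} (hk : 0 < k)
    (hN : k ^ Fintype.card ι * ω < N) :
    ∃ S ⊆ Finset.range N, ω < S.card ∧
      ∀ s ∈ S, ∀ t ∈ S, ∀ i, (s * l i % N - t * l i % N).natAbs * k ≤ N := by
  classical
  have hN₀ : (0 : ℤ) < N := by exact_mod_cast Nat.zero_lt_of_lt hN
  let box (t : ℕ) (i : ι) : ℤ := t * l i % N * k / N
  have hbox : ∀ t ∈ Finset.range N, box t ∈ Fintype.piFinset fun _ : ι => Finset.Ico (0 : ℤ) k := by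
    intro t _
    rw [Fintype.mem_piFinset]
    intro i
    have h₀ := Int.emod_nonneg (t * l i) hN₀.ne'
    have h₁ := Int.emod_lt_of_pos (t * l i) hN₀
    rw [Finset.mem_Ico]
    refine ⟨by positivity, Int.ediv_lt_of_lt_mul hN₀ ?_⟩
    rw [mul_comm]
    gcongr
  obtain ⟨y, -, hy⟩ := Finset.exists_lt_card_fiber_of_mul_lt_card_of_maps_to (n := ω) hbox
    (by simpa using hN)
  refine ⟨_, Finset.filter_subset _ _, hy, fun s hs t ht i => ?_⟩
  have hst : box s i = box t i := by
    rw [(Finset.mem_filter.1 hs).2, (Finset.mem_filter.1 ht).2]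
  have h := (abs_sub_lt_of_ediv_eq hN₀ hst).le
  rw [← sub_mul, abs_mul, Nat.abs_cast] at h
  zify
  exact h

variable {A : Type*} [AddCommGroup A] {f : (ι → ℤ) →+ A} {k ω N : ℕ}

lemma exists_map_ediv_eq (hk : 0 < k) (hN : k ^ Fintype.card ι * ω < N)
    (hcount : ∀ S : Finset A, (∀ x ∈ S, IsOfFinAddOrder x) → S.card ≤ ω)
    (htor : ∀ m e, (∀ i, (e i).natAbs * k ≤ N) → N • f m = f e → IsOfFinAddOrder (f m))
    {l : ι → ℤ} (hl : f l = 0) :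
    ∃ s t : ℕ, s < t ∧ t < N ∧ f (fun i => s * l i / N) = f (fun i => t * l i / N) := by
  classical
  obtain ⟨S, hSN, hS, hclose⟩ := exists_finset_emod_close l hk hN
  obtain ⟨s₀, hs₀⟩ : S.Nonempty := Finset.card_pos.1 (Nat.zero_lt_of_lt hS)
  let q (t : ℕ) : ι → ℤ := fun i => t * l i / N
  let r (t : ℕ) : ι → ℤ := fun i => t * l i % N
  have hqr (t : ℕ) : N • f (q t) + f (r t) = 0 := by
    have h : N • q t + r t = t • l := by
      ext i
      simpa [q, r] using Int.mul_ediv_add_emod (t * l i) N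
    rw [← map_nsmul, ← map_add, h, map_nsmul, hl, smul_zero]
  have htorsion : ∀ t ∈ S, IsOfFinAddOrder (f (q t) - f (q s₀)) := fun t ht => by
    rw [← map_sub]
    refine htor _ (r s₀ - r t) (hclose s₀ hs₀ t ht) ?_
    rw [map_sub, map_sub, smul_sub, eq_neg_of_add_eq_zero_left (hqr t),
      eq_neg_of_add_eq_zero_left (hqr s₀)]
    abel
  have hcard : (S.image fun t => f (q t) - f (q s₀)).card < S.card :=
    (hcount _ fun x hx => by
      obtain ⟨t, ht, rfl⟩ := Finset.mem_image.1 hx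
      exact htorsion t ht).trans_lt hS
  obtain ⟨s, hs, t, ht, hne, heq⟩ := Finset.exists_ne_map_eq_of_card_lt_of_maps_to hcard
    fun t ht => Finset.mem_image_of_mem _ ht
  have hlt : ∀ t ∈ S, t < N := fun t ht => Finset.mem_range.1 (hSN ht)
  rcases hne.lt_or_gt with hst | hst
  · exact ⟨s, t, hst, hlt t ht, sub_left_injective heq⟩
  · exact ⟨t, s, hst, hlt s hs, (sub_left_injective heq).symm⟩

lemma mem_closure_of_map_eq_zero (hk : 0 < k) (hN : k ^ Fintype.card ι * ω < N)
    (hcount : ∀ S : Finset A, (∀ x ∈ S, IsOfFinAddOrder x) → S.card ≤ ω)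
    (htor : ∀ m e, (∀ i, (e i).natAbs * k ≤ N) → N • f m = f e → IsOfFinAddOrder (f m))
    {T : ℕ} {l : ι → ℤ} (hl : f l = 0) (hlT : ∀ i, |l i| ≤ T) :
    l ∈ AddSubgroup.closure {r | f r = 0 ∧ ∀ i, |r i| ≤ N} := by
  induction T generalizing l with
  | zero => exact AddSubgroup.subset_closure ⟨hl, fun i => (hlT i).trans (by simp)⟩
  | succ T ih =>
    rcases le_or_gt (T + 1) N with hTN | hTN
    · exact AddSubgroup.subset_closure ⟨hl, fun i => (hlT i).trans (mod_cast hTN)⟩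
    obtain ⟨s, t, hst, htN, heq⟩ := exists_map_ediv_eq hk hN hcount htor hl
    let m : ι → ℤ := (fun i => t * l i / N) - fun i => s * l i / N
    have hm : f m = 0 := by rw [map_sub, heq, sub_self]
    have hbound (i : ι) : |m i| < (T + 1 : ℕ) ∧ |l i - m i| < (T + 1 : ℕ) :=
      abs_ediv_sub_ediv_lt (by exact_mod_cast hTN) (hlT i) s.cast_nonneg (by exact_mod_cast hst)
        (by exact_mod_cast htN)
    rw [← add_sub_cancel m l]
    refine add_mem (ih hm fun i => ?_) (ih (by rw [map_sub, hl, hm, sub_zero]) fun i => ?_)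
    · exact Int.le_of_lt_add_one (hbound i).1
    · exact Int.le_of_lt_add_one (hbound i).2

theorem ker_eq_closure_abs_le (hk : 0 < k) (hN : k ^ Fintype.card ι * ω < N)
    (hcount : ∀ S : Finset A, (∀ x ∈ S, IsOfFinAddOrder x) → S.card ≤ ω)
    (htor : ∀ m e, (∀ i, (e i).natAbs * k ≤ N) → N • f m = f e → IsOfFinAddOrder (f m)) :
    f.ker = AddSubgroup.closure {r | f r = 0 ∧ ∀ i, |r i| ≤ N} := by
  refine le_antisymm (fun l hl => ?_) ((AddSubgroup.closure_le _).2 fun r hr => hr.1)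
  refine mem_closure_of_map_eq_zero hk hN hcount htor hl (T := ∑ i, (l i).natAbs) fun i => ?_
  rw [Int.abs_eq_natAbs, Nat.cast_le]
  exact Finset.single_le_sum (f := fun i => (l i).natAbs) (fun _ _ => Nat.zero_le _)
    (Finset.mem_univ i)

end Lattice

section RatHeight

lemma abs_le_ratHeight (q : ℚ) : |q| ≤ ratHeight q := by
  rw [Rat.abs_def, Rat.divInt_eq_div, ratHeight]
  refine (div_le_self (by positivity) (by exact_mod_cast q.den_pos)).trans ?_
  rw [Int.cast_natCast, Nat.cast_le]
  exact le_max_left _ _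

lemma den_le_pow_of_ratHeight_le {ι : Type*} [Fintype ι] {A : Matrix ι ι ℚ} {H : ℕ}
    (hA : ∀ i j, ratHeight (A i j) ≤ H) : A.den ≤ H ^ Fintype.card ι ^ 2 := by
  have hdvd : A.den ∣ ∏ p : ι × ι, (A p.1 p.2).den :=
    Finset.lcm_dvd fun p _ =>
      Finset.dvd_prod_of_mem (fun p : ι × ι => (A p.1 p.2).den) (Finset.mem_univ p)
  calc A.den ≤ ∏ p : ι × ι, (A p.1 p.2).den :=
        Nat.le_of_dvd (Finset.prod_pos fun p _ => Rat.den_pos _) hdvd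
    _ ≤ ∏ _p : ι × ι, H := by
        gcongr with p
        exact (le_max_right _ _).trans (hA p.1 p.2)
    _ = H ^ Fintype.card ι ^ 2 := by
        rw [Finset.prod_const, Finset.card_univ, Fintype.card_prod, sq]

end RatHeight

section Eigenvalues

lemma spectrum_add_of_isNilpotent {R A : Type*} [CommRing R] [Ring A] [Algebra R A] {a x : A}
    (hx : IsNilpotent x) (hax : Commute a x) : spectrum R (a + x) = spectrum R a := by
  ext r
  have hcomm : Commute x (algebraMap R A r - a) :=
    (Algebra.commute_algebraMap_right r x).sub_right hax.symm
  rw [spectrum.mem_iff, spectrum.mem_iff, not_iff_not, ← sub_sub]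
  refine ⟨fun h => ?_, fun h => ?_⟩
  · simpa using hx.isUnit_add_right_of_commute h (hcomm.sub_right (Commute.refl x))
  · rw [sub_eq_add_neg]
    exact hx.neg.isUnit_add_left_of_commute h hcomm.neg_left

variable {ι : Type*} [Fintype ι] [DecidableEq ι]

lemma mem_spectrum_diagonal {R : Type*} [CommRing R] [Nontrivial R] (d : ι → R) (i : ι) :
    d i ∈ spectrum R (Matrix.diagonal d) := by
  rw [spectrum.mem_iff, Matrix.algebraMap_eq_diagonal, Matrix.diagonal_sub,
    Matrix.isUnit_diagonal, Pi.isUnit_iff]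
  exact fun h => by simpa using h i

lemma aeval_charpoly_eq_zero_iff_mem_spectrum {F K : Type*} [Field F] [Field K] [Algebra F K]
    {A : Matrix ι ι F} {x : K} :
    Polynomial.aeval x A.charpoly = 0 ↔ x ∈ spectrum K (A.map (algebraMap F K)) := by
  rw [Matrix.mem_spectrum_iff_isRoot_charpoly, Matrix.charpoly_map, Polynomial.IsRoot,
    Polynomial.eval_map_algebraMap]

variable {A : Matrix ι ι ℚ}

lemma isIntegral_den_mul {K : Type*} [Field K] [CharZero K] {x : K}
    (hx : Polynomial.aeval x A.charpoly = 0) : IsIntegral ℤ (A.den * x) := by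
  have hden : (A.den : K) ≠ 0 := Nat.cast_ne_zero.2 A.den_ne_zero
  have hnum : A.num.map (algebraMap ℤ K) = Units.mk0 (A.den : K) hden • A.map (algebraMap ℚ K) := by
    ext i j
    have h := A.num_div_den i j
    rw [div_eq_iff (Nat.cast_ne_zero.2 A.den_ne_zero)] at h
    have h' := congrArg (algebraMap ℚ K) h
    simp only [map_intCast, map_mul, map_natCast] at h'
    simp [Units.smul_def, h', mul_comm]
  have hmem : (A.den : K) * x ∈ spectrum K (A.num.map (algebraMap ℤ K)) :=
    hnum ▸ spectrum.smul_mem_smul_iff.2 (aeval_charpoly_eq_zero_iff_mem_spectrum.1 hx)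
  rw [Matrix.mem_spectrum_iff_isRoot_charpoly, Matrix.charpoly_map] at hmem
  exact ⟨A.num.charpoly, A.num.charpoly_monic, by rwa [← Polynomial.eval_map]⟩

open scoped Matrix.Norms.Operator in
lemma norm_le_card_mul_of_mem_spectrum {M : Matrix ι ι ℂ} {B : ℝ}
    (hM : ∀ i j, ‖M i j‖ ≤ B) {z : ℂ} (hz : z ∈ spectrum ℂ M) : ‖z‖ ≤ Fintype.card ι * B := by
  rcases isEmpty_or_nonempty ι with _ | ⟨⟨i⟩⟩
  · simp [spectrum.of_subsingleton] at hz
  have hB : 0 ≤ B := (norm_nonneg _).trans (hM i i)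
  have : Nonempty ι := ⟨i⟩
  refine (spectrum.norm_le_norm_of_mem hz).trans ?_
  lift B to NNReal using hB
  rw [Matrix.linfty_opNorm_def, ← NNReal.coe_natCast, ← NNReal.coe_mul, NNReal.coe_le_coe]
  refine Finset.sup_le fun i _ => ?_
  simpa using Finset.sum_le_card_nsmul Finset.univ _ B fun j _ => hM i j

variable {K : Type*} [Field K] [NumberField K]

open Height

lemma mulHeight₁_le_of_ratHeight_le {H : ℕ} (hA : ∀ i j, ratHeight (A i j) ≤ H) {x : K}
    (hx : Polynomial.aeval x A.charpoly = 0) :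
    mulHeight₁ x ≤
      ((H ^ Fintype.card ι ^ 2) ^ 2 * (Fintype.card ι * H) : ℝ) ^ Module.finrank ℚ K := by
  have hmem := aeval_charpoly_eq_zero_iff_mem_spectrum.1 hx
  have hι : Nonempty ι := by
    rw [← not_isEmpty_iff]
    intro _
    simp [spectrum.of_subsingleton] at hmem
  have hnorm (φ : K →+* ℂ) : ‖φ x‖ ≤ Fintype.card ι * H := by
    refine norm_le_card_mul_of_mem_spectrum (M := A.map (algebraMap ℚ ℂ)) (fun i j => ?_) ?_
    · rw [Matrix.map_apply, eq_ratCast, ← Complex.ofReal_ratCast, Complex.norm_real,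
        Real.norm_eq_abs]
      exact_mod_cast (abs_le_ratHeight _).trans (Nat.cast_le.2 (hA i j))
    · rw [← aeval_charpoly_eq_zero_iff_mem_spectrum]
      simpa [hx] using Polynomial.aeval_algHom_apply φ.toRatAlgHom x A.charpoly
  have hH : 1 ≤ H := (hι.elim fun i => (A i i).den_pos.trans_le
    ((le_max_right _ _).trans (hA i i)))
  refine (mulHeight₁_le_of_isIntegral_mul A.den_ne_zero (isIntegral_den_mul hx) ?_ hnorm).trans ?_
  · exact_mod_cast Nat.mul_pos Fintype.card_pos hH
  · gcongr
    exact_mod_cast den_le_pow_of_ratHeight_le hA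

lemma prod_mulHeight₁_pow_le {l : ℕ} (hl : 0 < l) (hA : ∀ i j, ratHeight (A i j) ≤ 2 ^ l)
    (hK : Module.finrank ℚ K ≤ (Fintype.card ι).factorial) {x : ι → K}
    (hx : ∀ i, Polynomial.aeval (x i) A.charpoly = 0) :
    (∏ i, mulHeight₁ (x i)) ^ (16 * Fintype.card ι ^ 2) ≤
      2 ^ (64 * Fintype.card ι ^ 5 * (Fintype.card ι).factorial * l) := by
  set n := Fintype.card ι with hn
  have hbase : ((2 ^ l) ^ n ^ 2) ^ 2 * (n * 2 ^ l) ≤ 2 ^ (4 * n ^ 2 * l) := by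
    rcases Nat.eq_zero_or_pos n with h₀ | hpos
    · simp [h₀]
    have hexp : l * n ^ 2 * 2 + (n + l) ≤ 4 * n ^ 2 * l := by
      have h₁ : n ≤ n ^ 2 * l :=
        (Nat.le_self_pow two_ne_zero n).trans (Nat.le_mul_of_pos_right _ hl)
      have h₂ : l ≤ n ^ 2 * l := Nat.le_mul_of_pos_left _ (by positivity)
      linarith
    calc ((2 ^ l) ^ n ^ 2) ^ 2 * (n * 2 ^ l) ≤ ((2 ^ l) ^ n ^ 2) ^ 2 * (2 ^ n * 2 ^ l) := by
          gcongr
          exact Nat.lt_two_pow_self.le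
      _ = 2 ^ (l * n ^ 2 * 2 + (n + l)) := by simp only [pow_add, pow_mul]
      _ ≤ 2 ^ (4 * n ^ 2 * l) := Nat.pow_le_pow_right two_pos hexp
  have hx' (i : ι) : mulHeight₁ (x i) ≤ 2 ^ (4 * n ^ 2 * l * n.factorial) := by
    refine (mulHeight₁_le_of_ratHeight_le hA (hx i)).trans ?_
    rw [pow_mul 2 _ n.factorial]
    calc _ ≤ ((2 : ℝ) ^ (4 * n ^ 2 * l)) ^ Module.finrank ℚ K := by
          gcongr
          exact_mod_cast hbase
      _ ≤ _ := pow_le_pow_right₀ (one_le_pow₀ one_le_two) hK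
  calc (∏ i, mulHeight₁ (x i)) ^ (16 * n ^ 2)
      ≤ (∏ _i : ι, (2 : ℝ) ^ (4 * n ^ 2 * l * n.factorial)) ^ (16 * n ^ 2) := by
        gcongr with i
        exact hx' i
    _ = 2 ^ (64 * n ^ 5 * n.factorial * l) := by
        rw [Finset.prod_const, Finset.card_univ, ← hn, ← pow_mul, ← pow_mul]
        ring_nf

end Eigenvalues

section RelationLattice

/-- The homomorphism `m ↦ ∏ i, lam i ^ m i`; its kernel is the lattice of multiplicative relations
among the `lam i`. -/
def monomialHom {ι G : Type*} [Fintype ι] [CommGroup G] (lam : ι → G) : (ι → ℤ) →+ Additive G where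
  toFun m := Additive.ofMul (∏ i, lam i ^ m i)
  map_zero' := by simp
  map_add' m m' := by simp [zpow_add, Finset.prod_mul_distrib]

lemma monomialHom_apply {ι G : Type*} [Fintype ι] [CommGroup G] (lam : ι → G) (m : ι → ℤ) :
    monomialHom lam m = Additive.ofMul (∏ i, lam i ^ m i) := rfl

lemma ker_monomialHom_comp {ι G H : Type*} [Fintype ι] [CommGroup G] [CommGroup H] {f : G →* H}
    (hf : Function.Injective f) (lam : ι → G) :
    (monomialHom (f ∘ lam)).ker = (monomialHom lam).ker := by
  ext m
  simp only [AddMonoidHom.mem_ker, monomialHom_apply, ofMul_eq_zero, Function.comp_apply,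
    ← map_zpow, ← map_prod, map_eq_one_iff f hf]

open IntermediateField

lemma finrank_adjoin_le_of_aeval_charpoly {ι F E : Type*} [Fintype ι] [DecidableEq ι]
    [Field F] [Field E] [Algebra F E] {A : Matrix ι ι F} {x : E}
    (hx : Polynomial.aeval x A.charpoly = 0) : Module.finrank F F⟮x⟯ ≤ Fintype.card ι := by
  rw [IntermediateField.adjoin.finrank ⟨_, A.charpoly_monic, hx⟩, ← A.charpoly_natDegree_eq_dim]
  exact Polynomial.natDegree_le_of_dvd (minpoly.dvd _ _ hx) A.charpoly_monic.ne_zero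

variable {ι : Type*} [Fintype ι] [DecidableEq ι] [Nonempty ι] {A : Matrix ι ι ℚ} {l N : ℕ}

lemma ker_monomialHom_eq_closure {K : Type*} [Field K] [NumberField K] [IsGalois ℚ K] (hl : 0 < l)
    (hA : ∀ i j, ratHeight (A i j) ≤ 2 ^ l)
    (hK : Module.finrank ℚ K ≤ (Fintype.card ι).factorial) {lam : ι → Kˣ}
    (hlam : ∀ i, Polynomial.aeval (lam i : K) A.charpoly = 0)
    (hN : (64 * Fintype.card ι ^ 5 * (Fintype.card ι).factorial * l) ^ Fintype.card ι *
      (2 * (Fintype.card ι).factorial ^ 2) < N) :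
    (monomialHom lam).ker =
      AddSubgroup.closure {r | monomialHom lam r = 0 ∧ ∀ i, |r i| ≤ N} := by
  have hn : 0 < Fintype.card ι := Fintype.card_pos
  have hk : 0 < 64 * Fintype.card ι ^ 5 * (Fintype.card ι).factorial * l := by positivity
  refine ker_eq_closure_abs_le hk hN (fun S hS => ?_) fun m e he hm => ?_
  · have hS' : ∀ x ∈ S.map Additive.toMul.toEmbedding, IsOfFinOrder x :=
      Finset.forall_mem_map.2 fun x hx => isOfFinAddOrder_ofMul_iff.1 (hS x hx)
    calc S.card = (S.map Additive.toMul.toEmbedding).card := (Finset.card_map _).symm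
      _ ≤ 2 * Module.finrank ℚ K ^ 2 := card_le_of_forall_isOfFinOrder hS'
      _ ≤ 2 * (Fintype.card ι).factorial ^ 2 := by gcongr
  · rw [monomialHom_apply, isOfFinAddOrder_ofMul_iff]
    exact isOfFinOrder_of_pow_eq_prod_zpow hn
      (fun i => finrank_adjoin_le_of_aeval_charpoly (hlam i)) (Nat.zero_lt_of_lt hN).ne' hk.ne'
      (prod_mulHeight₁_pow_le hl hA hK hlam) (Additive.ofMul.injective hm) he

lemma finrank_splittingField_le_factorial {F : Type*} [Field F] (p : Polynomial F) (E : Type*)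
    [Field E] [Algebra F E] [p.IsSplittingField F E] [IsGalois F E] :
    Module.finrank F E ≤ p.natDegree.factorial := by
  have : Fact (p.map (algebraMap F (AlgebraicClosure F))).Splits := ⟨IsAlgClosed.splits _⟩
  have : FiniteDimensional F E := Polynomial.IsSplittingField.finiteDimensional E p
  calc Module.finrank F E = Nat.card p.Gal := by
        rw [← IsGalois.card_aut_eq_finrank]
        exact Nat.card_congr (Polynomial.IsSplittingField.algEquiv E p).autCongr.toEquiv
    _ ≤ Nat.card (Equiv.Perm (p.rootSet (AlgebraicClosure F))) :=
        Nat.card_le_card_of_injective _ (Polynomial.Gal.galActionHom_injective p _)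
    _ ≤ p.natDegree.factorial := by
        rw [Nat.card_perm]
        exact Nat.factorial_le (p.ncard_rootSet_le _)

lemma exists_unitsMap_comp_eq_of_isSplittingField {ι F K E : Type*} [Field F] [Field K] [Field E]
    [Algebra F K] [Algebra F E] {p : Polynomial F} (hp : p ≠ 0) [p.IsSplittingField F K]
    (φ : K →ₐ[F] E) {lam : ι → Eˣ} (hlam : ∀ i, Polynomial.aeval (lam i : E) p = 0) :
    ∃ μ : ι → Kˣ, Units.map (φ : K →* E) ∘ μ = lam ∧
      ∀ i, Polynomial.aeval (μ i : K) p = 0 := by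
  have hex (i : ι) : ∃ x ∈ p.rootSet K, φ x = lam i := by
    have h : (lam i : E) ∈ p.rootSet E := Polynomial.mem_rootSet.2 ⟨hp, hlam i⟩
    rwa [← (Polynomial.IsSplittingField.splits K p).image_rootSet φ] at h
  choose x hxp hx using hex
  exact ⟨fun i => Units.mk0 (x i) fun h => (lam i).ne_zero (by rw [← hx, h, map_zero]),
    funext fun i => Units.ext (hx i), fun i => Polynomial.aeval_eq_zero_of_mem_rootSet (hxp i)⟩

theorem ker_monomialHom_eq_closure_of_isAlgClosed {E : Type*} [Field E] [Algebra ℚ E]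
    [IsAlgClosed E] (hl : 0 < l) (hA : ∀ i j, ratHeight (A i j) ≤ 2 ^ l) {lam : ι → Eˣ}
    (hlam : ∀ i, Polynomial.aeval (lam i : E) A.charpoly = 0)
    (hN : (64 * Fintype.card ι ^ 5 * (Fintype.card ι).factorial * l) ^ Fintype.card ι *
      (2 * (Fintype.card ι).factorial ^ 2) < N) :
    (monomialHom lam).ker =
      AddSubgroup.closure {r | monomialHom lam r = 0 ∧ ∀ i, |r i| ≤ N} := by
  let p := A.charpoly
  let K := p.SplittingField
  -- Here `K` has the `ℚ`-algebra structure of a characteristic zero field, which is equal but not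
  -- reducibly so to the one it has as a splitting field.
  have hp : p.IsSplittingField ℚ K := by
    convert Polynomial.IsSplittingField.splittingField p
    exact Subsingleton.elim _ _
  have : NumberField K := { to_finiteDimensional := hp.finiteDimensional _ _ }
  have : Normal ℚ K := .of_isSplittingField p
  have : IsGalois ℚ K := ⟨⟩
  have hK : Module.finrank ℚ K ≤ (Fintype.card ι).factorial := by
    rw [← A.charpoly_natDegree_eq_dim]
    exact finrank_splittingField_le_factorial p K
  let φ : K →ₐ[ℚ] E := IsAlgClosed.lift
  obtain ⟨μ, rfl, hμ⟩ :=
    exists_unitsMap_comp_eq_of_isSplittingField A.charpoly_monic.ne_zero φ hlam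
  have hφ : Function.Injective (φ : K →* E) := φ.toRingHom.injective
  have hker := ker_monomialHom_comp (Units.map_injective hφ) μ
  simp only [← AddMonoidHom.mem_ker, hker]
  exact ker_monomialHom_eq_closure hl hA hK hμ hN

end RelationLattice

section JordanDecomposition

/-- The embedding `x ↦ P · diag(x) · P⁻¹` of the torus into `GL_n`; its image contains the cyclic
group generated by a semisimple matrix with eigenbasis `P`. -/
def conjDiag {ι K : Type*} [Fintype ι] [DecidableEq ι] [CommRing K] (P : GL ι K) :
    (ι → Kˣ) →* GL ι K :=
  (MulAut.conj P).toMonoidHom.comp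
    ((Units.map (Matrix.diagonalRingHom ι K : (ι → K) →* Matrix ι ι K)).comp
      MulEquiv.piUnits.symm.toMonoidHom)

section

variable {ι K : Type*} [Fintype ι] [DecidableEq ι] [CommRing K] (P : GL ι K)

lemma coe_conjDiag (x : ι → Kˣ) :
    (conjDiag P x : Matrix ι ι K) =
      P * Matrix.diagonal (fun i => (x i : K)) * (P⁻¹ : GL ι K) :=
  rfl

lemma det_conjDiag (x : ι → Kˣ) : (conjDiag P x : Matrix ι ι K).det = ∏ i, (x i : K) := by
  rw [coe_conjDiag, Matrix.coe_units_inv, Matrix.det_conj P.isUnit, Matrix.det_diagonal]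

lemma mem_spectrum_conjDiag [Nontrivial K] (x : ι → Kˣ) (i : ι) :
    (x i : K) ∈ spectrum K (conjDiag P x : Matrix ι ι K) := by
  rw [coe_conjDiag, spectrum.units_conjugate]
  exact mem_spectrum_diagonal (fun i => (x i : K)) i

end

lemma isSemisimple_algHom_pi {ι K V : Type*} [Finite ι] [Field K] [AddCommGroup V] [Module K V]
    (φ : (ι → K) →ₐ[K] Module.End K V) (d : ι → K) : (φ d).IsSemisimple := by
  classical
  have := Fintype.ofFinite ι
  let q : Polynomial K := ∏ μ ∈ Finset.univ.image d, (Polynomial.X - Polynomial.C μ)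
  have hq : Squarefree q :=
    (Polynomial.separable_prod_X_sub_C_iff'.2 fun _ _ _ _ h => h).squarefree
  refine Module.End.isSemisimple_of_squarefree_aeval_eq_zero hq ?_
  have hd : Polynomial.aeval d q = 0 := by
    funext i
    simp only [q, map_prod, map_sub, Polynomial.aeval_X, Polynomial.aeval_C, Finset.prod_apply]
    exact Finset.prod_eq_zero (Finset.mem_image_of_mem d (Finset.mem_univ i)) (sub_self (d i))
  rw [Polynomial.aeval_algHom_apply, hd, map_zero]

variable {n : ℕ} {s u t v : GL (Fin n) Qbar}

namespace IsSemisimpleMat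

lemma isSemisimple_toLinAlgEquiv' {M : Matrix (Fin n) (Fin n) Qbar} (hM : IsSemisimpleMat M) :
    Module.End.IsSemisimple (Matrix.toLinAlgEquiv' M) := by
  obtain ⟨P, d, rfl⟩ := hM
  exact isSemisimple_algHom_pi
    (Matrix.toLinAlgEquiv'.toAlgHom.comp
      ((MulSemiringAction.toAlgEquiv Qbar _ (ConjAct.toConjAct P)).toAlgHom.comp
        (Matrix.diagonalAlgHom Qbar))) d

lemma map {M : Matrix (Fin n) (Fin n) Qbar} (hM : IsSemisimpleMat M) (σ : Qbar →+* Qbar) :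
    IsSemisimpleMat (M.map σ) := by
  obtain ⟨P, d, rfl⟩ := hM
  refine ⟨Matrix.GeneralLinearGroup.map σ P, σ ∘ d, ?_⟩
  rw [← map_inv, Matrix.map_mul, Matrix.map_mul, Matrix.diagonal_map (map_zero σ)]
  rfl

lemma exists_conjDiag_eq (hs : IsSemisimpleMat (s : Matrix (Fin n) (Fin n) Qbar)) :
    ∃ P x, conjDiag P x = s := by
  obtain ⟨P, d, hd⟩ := hs
  have hunit : IsUnit (Matrix.diagonal d) :=
    ⟨P⁻¹ * s * P, by simp [hd, mul_assoc]⟩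
  have hdi := Pi.isUnit_iff.1 (Matrix.isUnit_diagonal.1 hunit)
  exact ⟨P, fun i => (hdi i).unit, Units.ext hd.symm⟩

end IsSemisimpleMat

lemma commute_sub_one (h : Commute s u) :
    Commute (s : Matrix (Fin n) (Fin n) Qbar) ((u : Matrix (Fin n) (Fin n) Qbar) - 1) :=
  h.units_val.sub_right (Commute.one_right _)

lemma commute_mul_sub_one (h : Commute s u) :
    Commute (s : Matrix (Fin n) (Fin n) Qbar) (s * (u - 1)) :=
  (Commute.refl _).mul_right (commute_sub_one h)

lemma IsUnipotent.isNilpotent_mul_sub_one (hu : IsUnipotent u) (h : Commute s u) :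
    IsNilpotent ((s : Matrix (Fin n) (Fin n) Qbar) * (u - 1)) :=
  (commute_sub_one h).isNilpotent_mul_left ⟨n, hu⟩

lemma coe_mul_eq_add (s u : GL (Fin n) Qbar) :
    ((s * u : GL (Fin n) Qbar) : Matrix (Fin n) (Fin n) Qbar) = s + s * (u - 1) := by
  rw [Units.val_mul, mul_sub, mul_one, add_sub_cancel]

lemma IsUnipotent.spectrum_mul (hu : IsUnipotent u) (h : Commute s u) :
    spectrum Qbar ((s * u : GL (Fin n) Qbar) : Matrix (Fin n) (Fin n) Qbar) =
      spectrum Qbar (s : Matrix (Fin n) (Fin n) Qbar) := by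
  rw [coe_mul_eq_add, spectrum_add_of_isNilpotent (hu.isNilpotent_mul_sub_one h)
    (commute_mul_sub_one h)]

lemma eq_of_mul_eq_mul_of_isSemisimpleMat_of_isUnipotent
    (hs : IsSemisimpleMat (s : Matrix (Fin n) (Fin n) Qbar)) (hu : IsUnipotent u)
    (hsu : Commute s u) (ht : IsSemisimpleMat (t : Matrix (Fin n) (Fin n) Qbar))
    (hv : IsUnipotent v) (htv : Commute t v) (h : s * u = t * v) : s = t := by
  let toEnd := Matrix.toLinAlgEquiv' (R := Qbar) (n := Fin n)
  have hadd : toEnd (s * (u - 1)) + toEnd s = toEnd (t * (v - 1)) + toEnd t := by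
    rw [← map_add, ← map_add, add_comm, ← coe_mul_eq_add, h, coe_mul_eq_add, add_comm]
  refine Units.ext (toEnd.injective (Module.End.isNilpotent_isSemisimple_unique
    ((hu.isNilpotent_mul_sub_one hsu).map toEnd) hs.isSemisimple_toLinAlgEquiv'
    ((hv.isNilpotent_mul_sub_one htv).map toEnd) ht.isSemisimple_toLinAlgEquiv'
    ((commute_mul_sub_one hsu).symm.map toEnd) ((commute_mul_sub_one htv).symm.map toEnd) hadd).2)

-- Instance search endows `Qbar` with the `ℚ`-algebra structure of a characteristic zero field,
-- which is equal but not reducibly so to the one carried by `AlgebraicClosure ℚ`.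
instance : IsAlgClosure ℚ Qbar := by
  rw [Subsingleton.elim DivisionRing.toRatAlgebra (AlgebraicClosure.instAlgebra ℚ)]
  infer_instance

lemma IsUnipotent.map (hu : IsUnipotent u) (σ : Qbar →+* Qbar) :
    IsUnipotent (Matrix.GeneralLinearGroup.map σ u) := by
  have := congrArg σ.mapMatrix hu
  rwa [map_pow, map_sub, map_one, map_zero] at this

lemma exists_map_eq_of_isSemisimpleMat_of_isUnipotent {g : GL (Fin n) ℚ}
    (hs : IsSemisimpleMat (s : Matrix (Fin n) (Fin n) Qbar)) (hu : IsUnipotent u)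
    (hsu : Commute s u) (h : s * u = Matrix.GeneralLinearGroup.map (algebraMap ℚ Qbar) g) :
    ∃ r : GL (Fin n) ℚ, Matrix.GeneralLinearGroup.map (algebraMap ℚ Qbar) r = s := by
  have hfix : ∀ σ : Qbar ≃ₐ[ℚ] Qbar, Matrix.GeneralLinearGroup.map (σ : Qbar →+* Qbar) s = s :=
    fun σ => eq_of_mul_eq_mul_of_isSemisimpleMat_of_isUnipotent (hs.map σ) (hu.map σ)
      (hsu.map _) hs hu hsu (by
        rw [← map_mul, h]
        ext i j
        simp)
  have hrat : ∀ i j, ∃ q : ℚ, algebraMap ℚ Qbar q = (s : Matrix (Fin n) (Fin n) Qbar) i j :=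
    fun i j => (InfiniteGalois.mem_range_algebraMap_iff_fixed _).2 fun σ =>
      congrArg (fun t : GL (Fin n) Qbar => (t : Matrix (Fin n) (Fin n) Qbar) i j) (hfix σ)
  choose R hR using hrat
  have hmap : (Matrix.of R).map (algebraMap ℚ Qbar) = s := Matrix.ext hR
  have hdet : (Matrix.of R).det ≠ 0 := fun h0 => by
    have := (algebraMap ℚ Qbar).map_det (Matrix.of R)
    rw [h0, map_zero, RingHom.mapMatrix_apply, hmap] at this
    exact s.det_ne_zero this.symm
  exact ⟨Matrix.GeneralLinearGroup.mkOfDetNeZero _ hdet, Units.ext hmap⟩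

end JordanDecomposition

section Descent

variable {σ F E : Type*} [Field F] [Field E] [Algebra F E]

/-- The polynomial obtained by applying the linear form `ℓ` to each coefficient of `f`; it is used
to pass from equations over `E` to equations over `F`. -/
def mapCoeff (ℓ : E →ₗ[F] F) (f : MvPolynomial σ E) : MvPolynomial σ F :=
  ∑ m ∈ f.support, monomial m (ℓ (f.coeff m))

lemma totalDegree_mapCoeff_le (ℓ : E →ₗ[F] F) (f : MvPolynomial σ E) :
    (mapCoeff ℓ f).totalDegree ≤ f.totalDegree :=
  totalDegree_finsetSum_le fun _ hm => (totalDegree_monomial_le _ _).trans (le_totalDegree hm)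

lemma aeval_mapCoeff (ℓ : E →ₗ[F] F) (f : MvPolynomial σ E) (a : σ → E) :
    aeval a (mapCoeff ℓ f) =
      ∑ m ∈ f.support, algebraMap F E (ℓ (f.coeff m)) * ∏ i ∈ m.support, a i ^ m i := by
  simp [mapCoeff, aeval_monomial, Finsupp.prod]

lemma eval_mapCoeff (ℓ : E →ₗ[F] F) (f : MvPolynomial σ E) (q : σ → F) :
    eval q (mapCoeff ℓ f) = ℓ (eval (algebraMap F E ∘ q) f) := by
  rw [mapCoeff, map_sum, eval_eq (algebraMap F E ∘ q), map_sum]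
  refine Finset.sum_congr rfl fun m _ => ?_
  simp only [Function.comp_apply, ← map_pow, ← map_prod]
  rw [mul_comm, ← Algebra.smul_def, map_smul, smul_eq_mul, mul_comm, eval_monomial, Finsupp.prod]

lemma eval_eq_zero_of_forall_aeval_mapCoeff {f : MvPolynomial σ E} {a : σ → E}
    (h : ∀ ℓ : E →ₗ[F] F, aeval a (mapCoeff ℓ f) = 0) : eval a f = 0 := by
  classical
  let b := Module.Basis.ofVectorSpace F E
  let T := f.support.biUnion fun m => (b.repr (f.coeff m)).support
  have hcoeff : ∀ m ∈ f.support,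
      f.coeff m = ∑ k ∈ T, algebraMap F E (b.coord k (f.coeff m)) * b k := fun m hm => by
    conv_lhs => rw [← b.linearCombination_repr (f.coeff m), Finsupp.linearCombination_apply]
    rw [Finsupp.sum_of_support_subset _ (Finset.subset_biUnion_of_mem
      (fun m => (b.repr (f.coeff m)).support) hm) _ (by simp)]
    simp only [Algebra.smul_def, Module.Basis.coord_apply, T]
  calc eval a f
      = ∑ m ∈ f.support, (∑ k ∈ T, algebraMap F E (b.coord k (f.coeff m)) * b k) *
          ∏ i ∈ m.support, a i ^ m i := by
        rw [eval_eq]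
        exact Finset.sum_congr rfl fun m hm => by rw [← hcoeff m hm]
    _ = ∑ k ∈ T, b k * aeval a (mapCoeff (b.coord k) f) := by
        simp only [aeval_mapCoeff, Finset.mul_sum, Finset.sum_mul]
        rw [Finset.sum_comm]
        refine Finset.sum_congr rfl fun k _ => Finset.sum_congr rfl fun m _ => ?_
        ring
    _ = 0 := Finset.sum_eq_zero fun k _ => by rw [h, mul_zero]

end Descent

lemma boundedOverQ_zariskiClosure {σ : Type} {Y : Set (σ → Qbar)}
    (hY : ∀ y ∈ Y, ∃ q : σ → ℚ, y = algebraMap ℚ Qbar ∘ q) {d : ℕ}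
    (hd : ∀ a : σ → Qbar, (∀ f : MvPolynomial σ Qbar, f.totalDegree ≤ d →
      (∀ y ∈ Y, eval y f = 0) → eval a f = 0) → a ∈ zariskiClosure Y) :
    BoundedOverQ (zariskiClosure Y) d := by
  refine ⟨{f | (f.totalDegree ≤ d ∧ ∀ m, f.coeff m ∈ Set.range (algebraMap ℚ Qbar)) ∧
    ∀ y ∈ Y, eval y f = 0}, ?_, fun f hf => hf.1⟩
  refine Set.Subset.antisymm (fun a ha f hf => ha f hf.2) fun a ha => hd a fun f hfd hfY => ?_
  refine eval_eq_zero_of_forall_aeval_mapCoeff (F := ℚ) fun ℓ => ?_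
  rw [aeval_def, ← eval_map]
  refine ha _ ⟨⟨?_, fun m => ⟨_, (coeff_map _ _ _).symm⟩⟩, fun y hy => ?_⟩
  · exact (Finset.sup_mono (support_map_subset _ _)).trans
      ((totalDegree_mapCoeff_le ℓ f).trans hfd)
  · obtain ⟨q, rfl⟩ := hY y hy
    rw [eval_map, ← eval₂_comp, eval_mapCoeff, hfY _ hy, map_zero, map_zero]

section Characters

lemma sum_mul_eq_zero_of_forall_sum_mul_pow_eq_zero {ι K : Type*} [CommRing K] [IsDomain K]
    {χ ψ : ι → K} (hψ : ψ.FactorsThrough χ) {c : ι →₀ K}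
    (h : ∀ k : ℕ, (c.sum fun i a => a * χ i ^ k) = 0) : (c.sum fun i a => a * ψ i) = 0 := by
  let b := c.mapDomain fun i => powersHom K (χ i)
  have hb : b = 0 := by
    refine linearIndependent_iff.1 (linearIndependent_monoidHom (Multiplicative ℕ) K) b ?_
    funext k
    rw [Finsupp.linearCombination_mapDomain, Finsupp.linearCombination_apply]
    simpa [Finsupp.sum, Finset.sum_apply] using h k.toAdd
  obtain ⟨e, rfl⟩ := (Function.factorsThrough_iff ψ).1 hψ
  calc (c.sum fun i a => a * e (χ i))
      = c.sum fun i a => a * e (powersHom K (χ i) (Multiplicative.ofAdd 1)) := by simp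
    _ = b.sum fun θ a => a * e (θ (Multiplicative.ofAdd 1)) :=
        (Finsupp.sum_mapDomain_index
          (h := fun (θ : Multiplicative ℕ →* K) a => a * e (θ (Multiplicative.ofAdd 1)))
          (fun _ => zero_mul _) fun _ _ _ => add_mul _ _ _).symm
    _ = 0 := by rw [hb, Finsupp.sum_zero_index]

lemma monomialHom_zpow {ι G : Type*} [Fintype ι] [CommGroup G] (lam : ι → G) (k : ℤ) (m : ι → ℤ) :
    monomialHom (lam ^ k) m = k • monomialHom lam m := by
  simp only [monomialHom_apply, Pi.pow_apply, zpow_comm _ k, Finset.prod_zpow, ofMul_zpow]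

variable {ι K : Type*} [Fintype ι] [Field K]

/-- Evaluation of Laurent polynomials, encoded as elements of the monoid algebra of `ι → ℤ`, at a
point of the torus. -/
def laurentEval (x : ι → Kˣ) : AddMonoidAlgebra K (ι → ℤ) →ₐ[K] K :=
  AddMonoidAlgebra.lift K K (ι → ℤ)
    ((Units.coeHom K).comp (AddMonoidHom.toMultiplicativeLeft (monomialHom x)))

lemma laurentEval_single (x : ι → Kˣ) (m : ι → ℤ) (a : K) :
    laurentEval x (AddMonoidAlgebra.single m a) = a * ((monomialHom x m).toMul : Kˣ) :=
  AddMonoidAlgebra.lift_single _ _ _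

lemma laurentEval_eq_sum (x : ι → Kˣ) (F : AddMonoidAlgebra K (ι → ℤ)) :
    laurentEval x F = F.coeff.sum fun m a => a * ((monomialHom x m).toMul : Kˣ) :=
  AddMonoidAlgebra.lift_apply _ _

lemma laurentEval_eq_zero_of_ker_le {lam x : ι → Kˣ}
    (hx : (monomialHom lam).ker ≤ (monomialHom x).ker) {F : AddMonoidAlgebra K (ι → ℤ)}
    (hF : ∀ k : ℕ, laurentEval (lam ^ k) F = 0) : laurentEval x F = 0 := by
  rw [laurentEval_eq_sum]
  refine sum_mul_eq_zero_of_forall_sum_mul_pow_eq_zero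
    (χ := fun m => ((monomialHom lam m).toMul : K)) (fun m m' h => ?_) fun k => ?_
  · have hlam : monomialHom lam (m - m') = 0 := by
      rw [map_sub, sub_eq_zero]
      exact Units.ext h
    have hx₀ : monomialHom x (m - m') = 0 := hx hlam
    rw [map_sub, sub_eq_zero] at hx₀
    exact congrArg (fun t => ((Additive.toMul t : Kˣ) : K)) hx₀
  · rw [← hF k, laurentEval_eq_sum]
    refine Finsupp.sum_congr fun m _ => ?_
    rw [← zpow_natCast lam k, monomialHom_zpow, toMul_zsmul, zpow_natCast,
      Units.val_pow_eq_pow_val]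

end Characters

section RelationTorus

variable {n : ℕ} (P : GL (Fin n) Qbar)

/-- The set of points `P · diag(x) · P⁻¹` of `GL_n` for which `x` satisfies every multiplicative
relation satisfied by `lam`; it turns out to be the Zariski closure of the cyclic group generated by
`P · diag(lam) · P⁻¹`. -/
def relationTorus (lam : Fin n → Qbarˣ) : Set (glIdx n → Qbar) :=
  (fun x => glPoint (conjDiag P x)) '' {x | (monomialHom lam).ker ≤ (monomialHom x).ker}

lemma glPoint_conjDiag_inl (x : Fin n → Qbarˣ) (i j : Fin n) :
    glPoint (conjDiag P x) (Sum.inl (i, j)) =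
      ∑ k, (x k : Qbar) * ((P : Matrix (Fin n) (Fin n) Qbar) i k *
        ((P⁻¹ : GL (Fin n) Qbar) : Matrix (Fin n) (Fin n) Qbar) k j) := by
  rw [glPoint, Sum.elim_inl, coe_conjDiag, Matrix.mul_apply]
  refine Finset.sum_congr rfl fun k _ => ?_
  rw [Matrix.mul_diagonal]
  ring

lemma glPoint_conjDiag_inr (x : Fin n → Qbarˣ) (t : Unit) :
    glPoint (conjDiag P x) (Sum.inr t) = (∏ i, (x i : Qbar))⁻¹ := by
  rw [glPoint, Sum.elim_inr, det_conjDiag]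

lemma exists_laurentEval_eq_eval_glPoint_conjDiag (f : MvPolynomial (glIdx n) Qbar) :
    ∃ F, ∀ x, laurentEval x F = eval (glPoint (conjDiag P x)) f := by
  have hcoord : ∀ i, ∃ F, ∀ x, laurentEval x F = glPoint (conjDiag P x) i := by
    rintro (⟨i, j⟩ | t)
    · refine ⟨∑ k, AddMonoidAlgebra.single (Pi.single k 1)
        ((P : Matrix (Fin n) (Fin n) Qbar) i k *
          ((P⁻¹ : GL (Fin n) Qbar) : Matrix (Fin n) (Fin n) Qbar) k j), fun x => ?_⟩
      rw [map_sum, glPoint_conjDiag_inl]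
      refine Finset.sum_congr rfl fun k _ => ?_
      rw [laurentEval_single, monomialHom_apply, toMul_ofMul,
        Fintype.prod_eq_single k (by simp +contextual), Pi.single_eq_same, zpow_one, mul_comm]
    · refine ⟨AddMonoidAlgebra.single (fun _ => -1) 1, fun x => ?_⟩
      rw [laurentEval_single, glPoint_conjDiag_inr]
      simp [monomialHom_apply]
  choose F hF using hcoord
  refine ⟨aeval F f, fun x => ?_⟩
  rw [← aeval_eq_eval, comp_aeval_apply, funext fun i => hF i x]

lemma relationTorus_subset_zariskiClosure (lam : Fin n → Qbarˣ) :
    relationTorus P lam ⊆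
      zariskiClosure (glPoint '' (Subgroup.closure {conjDiag P lam} : Set (GL (Fin n) Qbar))) := by
  rintro _ ⟨x, hx, rfl⟩ f hf
  obtain ⟨F, hF⟩ := exists_laurentEval_eq_eval_glPoint_conjDiag P f
  rw [← hF]
  refine laurentEval_eq_zero_of_ker_le hx fun k => ?_
  rw [hF, map_pow]
  exact hf _ ⟨_, pow_mem (Subgroup.mem_closure_singleton_self _) k, rfl⟩

lemma glPoint_image_closure_subset_relationTorus (lam : Fin n → Qbarˣ) :
    glPoint '' (Subgroup.closure {conjDiag P lam} : Set (GL (Fin n) Qbar)) ⊆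
      relationTorus P lam := by
  rintro _ ⟨t, ht, rfl⟩
  obtain ⟨k, rfl⟩ := Subgroup.mem_closure_singleton.1 ht
  refine ⟨lam ^ k, fun m hm => ?_, congrArg glPoint (map_zpow _ _ _)⟩
  rw [AddMonoidHom.mem_ker] at hm ⊢
  rw [monomialHom_zpow, hm, smul_zero]

/-- The entries of `P⁻¹ · X · P` as linear forms in the entries of the generic matrix `X`. -/
def conjForm (i j : Fin n) : MvPolynomial (glIdx n) Qbar :=
  ∑ k, ∑ l, C (((P⁻¹ : GL (Fin n) Qbar) : Matrix (Fin n) (Fin n) Qbar) i k *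
    (P : Matrix (Fin n) (Fin n) Qbar) l j) * X (Sum.inl (k, l))

lemma totalDegree_conjForm_le (i j : Fin n) : (conjForm P i j).totalDegree ≤ 1 :=
  totalDegree_finsetSum_le fun _ _ => totalDegree_finsetSum_le fun _ _ =>
    (totalDegree_mul _ _).trans (by rw [totalDegree_C, totalDegree_X])

lemma totalDegree_X_mul_prod_conjForm_sub_one_le :
    (X (Sum.inr ()) * ∏ i, conjForm P i i - 1).totalDegree ≤ n + 1 := calc
  (X (Sum.inr ()) * ∏ i, conjForm P i i - 1).totalDegree
      ≤ (X (Sum.inr ()) * ∏ i, conjForm P i i).totalDegree :=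
        (totalDegree_sub _ _).trans (by rw [totalDegree_one, max_eq_left (Nat.zero_le _)])
  _ ≤ 1 + ∑ i, (conjForm P i i).totalDegree :=
      (totalDegree_mul _ _).trans (add_le_add (totalDegree_X _).le (totalDegree_finsetProd _ _))
  _ ≤ 1 + ∑ _i : Fin n, 1 := by gcongr; exact totalDegree_conjForm_le P _ _
  _ = n + 1 := by simp [add_comm]

lemma eval_conjForm (i j : Fin n) (a : glIdx n → Qbar) :
    eval a (conjForm P i j) =
      (((P⁻¹ : GL (Fin n) Qbar) : Matrix (Fin n) (Fin n) Qbar) * pointMatrix a * P) i j := by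
  simp only [conjForm, map_sum, map_mul, eval_C, eval_X, Matrix.mul_apply, Finset.sum_mul]
  rw [Finset.sum_comm]
  refine Finset.sum_congr rfl fun l _ => Finset.sum_congr rfl fun k _ => ?_
  simp only [pointMatrix, Matrix.of_apply]
  ring

lemma eval_conjForm_glPoint_conjDiag (i j : Fin n) (x : Fin n → Qbarˣ) :
    eval (glPoint (conjDiag P x)) (conjForm P i j) =
      Matrix.diagonal (fun i => (x i : Qbar)) i j := by
  have hpt : pointMatrix (glPoint (conjDiag P x)) = conjDiag P x := rfl
  rw [eval_conjForm, hpt, coe_conjDiag, mul_assoc, mul_assoc, Units.inv_mul, mul_one,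
    Units.inv_mul_cancel_left]

lemma exists_eq_glPoint_conjDiag {a : glIdx n → Qbar}
    (hoff : ∀ i j, i ≠ j → eval a (conjForm P i j) = 0)
    (hdet : a (Sum.inr ()) * ∏ i, eval a (conjForm P i i) = 1) :
    ∃ x, a = glPoint (conjDiag P x) := by
  have hne : ∀ i, eval a (conjForm P i i) ≠ 0 := fun i h => by
    rw [Finset.prod_eq_zero (Finset.mem_univ i) h, mul_zero] at hdet
    exact zero_ne_one hdet
  let x : Fin n → Qbarˣ := fun i => Units.mk0 _ (hne i)
  have hdiag : ((P⁻¹ : GL (Fin n) Qbar) : Matrix (Fin n) (Fin n) Qbar) * pointMatrix a * P =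
      Matrix.diagonal fun i => (x i : Qbar) := by
    ext i j
    rw [← eval_conjForm, Matrix.diagonal_apply]
    split_ifs with h
    · rw [h, Units.val_mk0]
    · exact hoff i j h
  have hM : pointMatrix a = conjDiag P x := by
    rw [coe_conjDiag, ← hdiag]
    simp [mul_assoc]
  refine ⟨x, funext ?_⟩
  rintro (⟨i, j⟩ | t)
  · exact congrFun (congrFun hM i) j
  · rw [glPoint_conjDiag_inr]
    exact eq_inv_of_mul_eq_one_left hdet

/-- The binomial in the diagonal entries of `P⁻¹ · X · P` expressing the multiplicative relation
with exponents `r`. -/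
def relationBinomial (r : Fin n → ℤ) : MvPolynomial (glIdx n) Qbar :=
  ∏ i, conjForm P i i ^ (r i).toNat - ∏ i, conjForm P i i ^ (-r i).toNat

lemma totalDegree_relationBinomial_le {r : Fin n → ℤ} {N : ℕ} (hr : ∀ i, |r i| ≤ N) :
    (relationBinomial P r).totalDegree ≤ n * N := by
  have hprod : ∀ e : Fin n → ℕ, (∀ i, e i ≤ N) →
      (∏ i, conjForm P i i ^ e i).totalDegree ≤ n * N := fun e he => calc
    (∏ i, conjForm P i i ^ e i).totalDegree
        ≤ ∑ i, (conjForm P i i ^ e i).totalDegree := totalDegree_finsetProd _ _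
    _ ≤ ∑ _i : Fin n, N := Finset.sum_le_sum fun i _ => (totalDegree_pow _ _).trans
        ((Nat.mul_le_mul (he i) (totalDegree_conjForm_le P i i)).trans_eq (mul_one N))
    _ = n * N := by simp
  exact (totalDegree_sub _ _).trans (max_le (hprod _ fun i => by grind) (hprod _ fun i => by grind))

lemma eval_relationBinomial_eq_zero_iff (x : Fin n → Qbarˣ) (r : Fin n → ℤ) :
    eval (glPoint (conjDiag P x)) (relationBinomial P r) = 0 ↔ monomialHom x r = 0 := by
  have hx : monomialHom x r = 0 ↔ ∏ i, x i ^ (r i).toNat = ∏ i, x i ^ (-r i).toNat := by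
    have hsplit : ∀ i, x i ^ r i = x i ^ (r i).toNat / x i ^ (-r i).toNat := fun i => by
      rw [← zpow_natCast, ← zpow_natCast, div_eq_mul_inv, ← zpow_sub, Int.toNat_sub_toNat_neg]
    rw [monomialHom_apply, ofMul_eq_zero, Finset.prod_congr rfl fun i _ => hsplit i,
      Finset.prod_div_distrib, div_eq_one]
  simp only [relationBinomial, map_sub, map_prod, map_pow, eval_conjForm_glPoint_conjDiag,
    Matrix.diagonal_apply_eq, sub_eq_zero, hx, Units.ext_iff, Units.coe_prod,
    Units.val_pow_eq_pow_val]

lemma mem_relationTorus_of_forall_totalDegree_le {lam : Fin n → Qbarˣ} {N d : ℕ}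
    (hgen : (monomialHom lam).ker =
      AddSubgroup.closure {r | monomialHom lam r = 0 ∧ ∀ i, |r i| ≤ N})
    (hd : n + 1 ≤ d) (hdN : n * N ≤ d) {a : glIdx n → Qbar}
    (ha : ∀ f : MvPolynomial (glIdx n) Qbar, f.totalDegree ≤ d →
      (∀ y ∈ relationTorus P lam, eval y f = 0) → eval a f = 0) :
    a ∈ relationTorus P lam := by
  have hoff : ∀ i j, i ≠ j → eval a (conjForm P i j) = 0 := fun i j hij => by
    refine ha _ ((totalDegree_conjForm_le P i j).trans (by omega)) ?_
    rintro _ ⟨x, -, rfl⟩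
    rw [eval_conjForm_glPoint_conjDiag, Matrix.diagonal_apply_ne _ hij]
  have hdet : a (Sum.inr ()) * ∏ i, eval a (conjForm P i i) = 1 := by
    have h := ha (X (Sum.inr ()) * ∏ i, conjForm P i i - 1) ?_ ?_
    · simpa [sub_eq_zero] using h
    · exact (totalDegree_X_mul_prod_conjForm_sub_one_le P).trans hd
    · rintro _ ⟨x, -, rfl⟩
      simp only [map_sub, map_mul, map_prod, map_one, eval_X, eval_conjForm_glPoint_conjDiag,
        Matrix.diagonal_apply_eq, glPoint_conjDiag_inr, sub_eq_zero]
      exact inv_mul_cancel₀ (Finset.prod_ne_zero_iff.2 fun i _ => (x i).ne_zero)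
  obtain ⟨x, rfl⟩ := exists_eq_glPoint_conjDiag P hoff hdet
  refine ⟨x, ?_, rfl⟩
  rw [Set.mem_ofPred_eq, hgen, AddSubgroup.closure_le]
  rintro r ⟨hr, hrN⟩
  refine (eval_relationBinomial_eq_zero_iff P x r).1
    (ha _ ((totalDegree_relationBinomial_le P hrN).trans hdN) ?_)
  rintro _ ⟨y, hy, rfl⟩
  exact (eval_relationBinomial_eq_zero_iff P y r).2 (hy hr)

end RelationTorus

section Numerics

open Nat in
lemma pow_mul_two_mul_factorial_sq_lt {n l : ℕ} (hn : 1 ≤ n) (hl : 0 < l) :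
    (64 * n ^ 5 * n ! * l) ^ n * (2 * n ! ^ 2) < (192 * n ^ 7 * n ! * l) ^ n := by
  have hpos : 0 < (64 * n ^ 5 * n ! * l) ^ n * (n ^ 2) ^ n := by positivity
  calc (64 * n ^ 5 * n ! * l) ^ n * (2 * n ! ^ 2)
      ≤ (64 * n ^ 5 * n ! * l) ^ n * (2 * (n ^ 2) ^ n) := by
        rw [pow_right_comm n 2 n]
        gcongr
        exact Nat.factorial_le_pow n
    _ = 2 * ((64 * n ^ 5 * n ! * l) ^ n * (n ^ 2) ^ n) := by ring
    _ < 3 ^ n * ((64 * n ^ 5 * n ! * l) ^ n * (n ^ 2) ^ n) :=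
        Nat.mul_lt_mul_of_pos_right (Nat.le_self_pow (Nat.one_le_iff_ne_zero.1 hn) 3) hpos
    _ = (192 * n ^ 7 * n ! * l) ^ n := by
        rw [← mul_pow, ← mul_pow]
        ring

lemma log_two_add_one_le_two_mul_logb {h : ℕ} (hh : 2 ≤ h) :
    ((Nat.log 2 h + 1 : ℕ) : ℝ) ≤ 2 * Real.logb 2 h := by
  have hlog : (1 : ℝ) ≤ Nat.log 2 h := mod_cast Nat.log_pos (by norm_num) hh
  have hlogb : (Nat.log 2 h : ℝ) ≤ Real.logb 2 h := Real.natLog_le_logb h 2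
  push_cast
  linarith

open Nat in
lemma pow_mul_two_mul_factorial_sq_lt_ceil {n h : ℕ} (hn : 1 ≤ n) (hh : 2 ≤ h) :
    (64 * n ^ 5 * n ! * (Nat.log 2 h + 1)) ^ n * (2 * n ! ^ 2) <
      ⌈(((384 : ℕ) : ℝ) * n ^ 7 * n ! * Real.logb 2 h) ^ n⌉₊ := by
  refine (pow_mul_two_mul_factorial_sq_lt hn (Nat.succ_pos _)).trans_le
    ((Nat.cast_le (α := ℝ)).1 ?_)
  calc (((192 * n ^ 7 * n ! * (Nat.log 2 h + 1)) ^ n : ℕ) : ℝ)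
      = (192 * n ^ 7 * n ! * ((Nat.log 2 h + 1 : ℕ) : ℝ)) ^ n := by push_cast; rfl
    _ ≤ (192 * n ^ 7 * n ! * (2 * Real.logb 2 h)) ^ n := by
        gcongr
        exact log_two_add_one_le_two_mul_logb hh
    _ = (((384 : ℕ) : ℝ) * n ^ 7 * n ! * Real.logb 2 h) ^ n := by push_cast; ring
    _ ≤ _ := Nat.le_ceil _

end Numerics

section CyclicClosure

variable {n : ℕ}

lemma exists_glPoint_map_eq (g : GL (Fin n) ℚ) :
    ∃ q : glIdx n → ℚ,
      glPoint (Matrix.GeneralLinearGroup.map (algebraMap ℚ Qbar) g) = algebraMap ℚ Qbar ∘ q := by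
  refine ⟨Sum.elim (fun p => (g : Matrix (Fin n) (Fin n) ℚ) p.1 p.2) fun _ =>
    (g : Matrix (Fin n) (Fin n) ℚ).det⁻¹, funext ?_⟩
  rintro (_ | _)
  · rfl
  · exact ((map_inv₀ _ _).trans (congrArg _ (RingHom.map_det _ _))).symm

lemma aeval_charpoly_eq_zero_of_conjDiag_mul_eq_map {P u : GL (Fin n) Qbar} {lam : Fin n → Qbarˣ}
    {g : GL (Fin n) ℚ} (hu : IsUnipotent u) (hcomm : Commute (conjDiag P lam) u)
    (h : conjDiag P lam * u = Matrix.GeneralLinearGroup.map (algebraMap ℚ Qbar) g) (i : Fin n) :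
    Polynomial.aeval (lam i : Qbar) (g : Matrix (Fin n) (Fin n) ℚ).charpoly = 0 := by
  have hmem := mem_spectrum_conjDiag P lam i
  rw [← hu.spectrum_mul hcomm, h] at hmem
  exact aeval_charpoly_eq_zero_iff_mem_spectrum.2 hmem

lemma boundedOverQ_zariskiClosure_closure {P : GL (Fin n) Qbar} {lam : Fin n → Qbarˣ} {N d : ℕ}
    (hrat : ∃ r, Matrix.GeneralLinearGroup.map (algebraMap ℚ Qbar) r = conjDiag P lam)
    (hgen : (monomialHom lam).ker =
      AddSubgroup.closure {r | monomialHom lam r = 0 ∧ ∀ i, |r i| ≤ N})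
    (hd : n + 1 ≤ d) (hdN : n * N ≤ d) :
    BoundedOverQ
      (zariskiClosure (glPoint '' (Subgroup.closure {conjDiag P lam} : Set (GL (Fin n) Qbar))))
      d := by
  obtain ⟨r, hr⟩ := hrat
  refine boundedOverQ_zariskiClosure ?_ fun a ha => relationTorus_subset_zariskiClosure P lam <|
    mem_relationTorus_of_forall_totalDegree_le P hgen hd hdN fun f hfd hf =>
      ha f hfd fun y hy => hf y (glPoint_image_closure_subset_relationTorus P lam hy)
  rintro _ ⟨t, ht, rfl⟩
  obtain ⟨k, rfl⟩ := Subgroup.mem_closure_singleton.1 ht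
  rw [← hr, ← map_zpow]
  exact exists_glPoint_map_eq _

end CyclicClosure

/-- **Degree bound for the closure of the cyclic group of the semisimple part**: there
is an absolute constant `c` such that for all `n ≥ 1` and all `g ∈ GL_n(ℚ)` with entries
of height at most `h ≥ 2`, if `g = s·u = u·s` is its multiplicative Jordan–Chevalley
decomposition with `s` semisimple and `u` unipotent, then `Zcl(⟨s⟩)` is `d`-bounded over
`ℚ` for `d = n·⌈(c·n⁷·n!·log₂ h)^n⌉`. -/
theorem stmt15 :
    ∃ c : ℕ, ∀ n : ℕ, 1 ≤ n → ∀ h : ℕ, 2 ≤ h → ∀ g : GL (Fin n) ℚ,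
      (∀ i j, ratHeight ((g : Matrix (Fin n) (Fin n) ℚ) i j) ≤ h) →
      ∀ s u : GL (Fin n) Qbar,
      (∀ i j, ((s * u : GL (Fin n) Qbar) : Matrix (Fin n) (Fin n) Qbar) i j =
        algebraMap ℚ Qbar ((g : Matrix (Fin n) (Fin n) ℚ) i j)) →
      s * u = u * s →
      IsSemisimpleMat (s : Matrix (Fin n) (Fin n) Qbar) →
      IsUnipotent u →
      BoundedOverQ
        (zariskiClosure (glPoint '' (Subgroup.closure {s} : Set (GL (Fin n) Qbar))))
        (n * ⌈((c : ℝ) * n ^ 7 * n.factorial * Real.logb 2 h) ^ n⌉₊) := by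
  refine ⟨384, fun n hn h hh g hg s u hsu hcomm hs hu => ?_⟩
  have hsu' : s * u = Matrix.GeneralLinearGroup.map (algebraMap ℚ Qbar) g :=
    Units.ext (Matrix.ext hsu)
  have hrat := exists_map_eq_of_isSemisimpleMat_of_isUnipotent hs hu hcomm hsu'
  obtain ⟨P, lam, rfl⟩ := hs.exists_conjDiag_eq
  have : Nonempty (Fin n) := ⟨⟨0, hn⟩⟩
  have hheight : ∀ i j, ratHeight (g.1 i j) ≤ 2 ^ (Nat.log 2 h + 1) := fun i j =>
    (hg i j).trans (Nat.lt_pow_succ_log_self one_lt_two h).le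
  have hN := pow_mul_two_mul_factorial_sq_lt_ceil hn hh
  have hgen := ker_monomialHom_eq_closure_of_isAlgClosed (Nat.succ_pos _) hheight
    (aeval_charpoly_eq_zero_of_conjDiag_mul_eq_map hu hcomm hsu')
    (by rwa [Fintype.card_fin])
  have hN₂ : 2 ≤ ⌈(((384 : ℕ) : ℝ) * n ^ 7 * n.factorial * Real.logb 2 h) ^ n⌉₊ :=
    (Nat.succ_le_of_lt (by positivity)).trans_lt hN
  exact boundedOverQ_zariskiClosure_closure hrat hgen (by nlinarith) le_rfl
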